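/- arXiv:2107.01394 — 8 statements merged into one kernel-verified Lean document; each statement's English description precedes it below -/
import Mathlib

section
/- Let c₁, c₂ > 0 and let F₃(x,y) = (min{−x,y}, y + x − min{−x,y}). Let X and Y be ℝ-valued independent random variables with densities f_X and f_Y satisfying: f_X > 0 exactly on [−c₁, c₂], f_Y > 0 exactly on [−c₂, ∞), both twice-differentiable in the interior of their supports. Set (U,V) := F₃(X,Y), and suppose U and V are independent and that (U,V) has the same distribution as (X,Y). Then there exist λ > 0 and c > 0 such that X ~ stExp(λ, −c, c) and Y ~ sExp(λ, −c). -/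
/-!
`F3` preserves the sum `x + y`; on the half-plane `0 < x + y` it is the shear
`(x, y) ↦ (-x, y + 2 * x)`, and on `x + y < 0` it swaps the coordinates.  Both maps are
area-preserving involutions, so invariance of the law of `(X, Y)` becomes two equations between
densities:

* `f u * g v = f (-u) * g (v + 2 * u)` for `0 < u + v`;
* `f u * g v = f v * g u` for `u + v < 0`.

The first one forces the support of `f` to be symmetric, and then says that the increments
`log (g (v + s)) - log (g v)` depend on `s` only.  Averaging over `s` writes `log ∘ g` as an
integral of itself, so continuity of `g` alone makes it differentiable, with constant derivative:
`g` is exponential.  The second equation makes `f` proportional to `g`, and the constants are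
determined by the total mass being one.
-/

open MeasureTheory ProbabilityTheory Set

/-- Density of the shifted exponential distribution sExp(l, c):
`(1/Z) e^{-l x} 1_{[c,∞)}(x)` with `Z = (1/l) e^{-l c}`. -/
noncomputable def sExpPdf (l c : ℝ) : ℝ → ℝ := fun x =>
  if c ≤ x then Real.exp (-(l * x)) / ((1 / l) * Real.exp (-(l * c))) else 0

/-- Density of the shifted truncated exponential distribution stExp(l, c1, c2):
`(1/Z) e^{-l x} 1_{[c1,c2]}(x)` with `Z = (1/l)(e^{-l c1} - e^{-l c2})`. -/
noncomputable def stExpPdf (l c1 c2 : ℝ) : ℝ → ℝ := fun x =>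
  if c1 ≤ x ∧ x ≤ c2 then
    Real.exp (-(l * x)) / ((1 / l) * (Real.exp (-(l * c1)) - Real.exp (-(l * c2))))
  else 0

/-- The transformation F₃. -/
noncomputable def F3 : ℝ × ℝ → ℝ × ℝ := fun p =>
  (min (-p.1) p.2, p.2 + p.1 - min (-p.1) p.2)

section Invariance

open scoped ENNReal Topology

variable {α : Type*} [MeasurableSpace α] {μ : Measure α}

lemma map_withDensity_of_involutive {L : α → α} (hL : MeasurePreserving L μ μ)
    (hinv : Function.Involutive L) (p : α → ℝ≥0∞) :
    (μ.withDensity p).map L = μ.withDensity (p ∘ L) := by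
  have hemb : MeasurableEmbedding L :=
    (MeasurableEquiv.ofInvolutive L hinv hL.measurable).measurableEmbedding
  ext s hs
  rw [Measure.map_apply hL.measurable hs, withDensity_apply _ (hL.measurable hs),
    withDensity_apply _ hs, ← hL.setLIntegral_comp_preimage_emb hemb (p ∘ L) s]
  simp only [Function.comp_apply, hinv _]

lemma ae_eq_comp_of_map_withDensity_eq [SigmaFinite μ] {T L : α → α} {p : α → ℝ≥0∞} {A : Set α}
    (hp : AEMeasurable p μ) (hT : Measurable T) (hL : MeasurePreserving L μ μ)
    (hinv : Function.Involutive L) (hA : MeasurableSet A) (hTA : T ⁻¹' A = A) (hLA : L ⁻¹' A = A)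
    (hTL : EqOn T L A) (hmap : (μ.withDensity p).map T = μ.withDensity p) :
    p =ᵐ[μ.restrict A] p ∘ L := by
  have hrestrict : (μ.withDensity p).restrict A = (μ.withDensity (p ∘ L)).restrict A := calc
    (μ.withDensity p).restrict A = ((μ.withDensity p).restrict A).map T := by
      conv_lhs => rw [← hmap, Measure.restrict_map hT hA, hTA]
    _ = ((μ.withDensity p).restrict A).map L :=
      Measure.map_congr (ae_restrict_of_forall_mem hA hTL)
    _ = (μ.withDensity (p ∘ L)).restrict A := by
      rw [← map_withDensity_of_involutive hL hinv, Measure.restrict_map hL.measurable hA, hLA]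
  rw [restrict_withDensity hA, restrict_withDensity hA] at hrestrict
  exact (withDensity_eq_iff_of_sigmaFinite hp.restrict
    (hp.comp_quasiMeasurePreserving hL.quasiMeasurePreserving).restrict).1 hrestrict

lemma eq_of_ae_eq_restrict_of_continuousAt [TopologicalSpace α] [OpensMeasurableSpace α]
    [μ.IsOpenPosMeasure] {β : Type*} [TopologicalSpace β] [T2Space β] {f g : α → β} {A : Set α}
    {a : α} (h : f =ᵐ[μ.restrict A] g) (hA : A ∈ 𝓝 a)
    (hf : ContinuousAt f a) (hg : ContinuousAt g a) : f a = g a := by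
  refine tendsto_nhds_unique_of_frequently_eq hf hg fun hne => ?_
  have hmem : {x | f x ≠ g x} ∩ interior A ∈ 𝓝 a :=
    Filter.inter_mem hne (interior_mem_nhds.2 hA)
  refine (Measure.measure_pos_of_mem_nhds μ hmem).ne' ?_
  have hint : ∀ᵐ x ∂μ, x ∈ interior A → f x = g x :=
    (ae_restrict_iff' isOpen_interior.measurableSet).1
      (ae_restrict_of_ae_restrict_of_subset interior_subset h)
  refine measure_mono_null ?_ (ae_iff.1 hint)
  exact fun x hx himp => hx.1 (himp hx.2)

end Invariance

lemma ae_eq_of_eqOn_interior_of_eqOn_compl {α β : Type*} [TopologicalSpace α] [MeasurableSpace α]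
    {μ : Measure α} {f g : α → β} {s : Set α} (hs : μ (frontier s) = 0)
    (hint : EqOn f g (interior s)) (hcompl : EqOn f g sᶜ) : f =ᵐ[μ] g := by
  filter_upwards [measure_eq_zero_iff_ae_notMem.1 hs] with x hx
  by_cases hxs : x ∈ s
  · exact hint (by_contra fun hxi => hx ⟨subset_closure hxs, hxi⟩)
  · exact hcompl hxs

/-- `f` is a (not necessarily normalised) density whose support is exactly `s` and which is
continuous in the interior of `s`.  Nothing is asked at the frontier of `s` beyond the sign. -/
structure IsContinuousDensityOn (f : ℝ → ℝ) (s : Set ℝ) : Prop where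
  pos : ∀ x ∈ s, 0 < f x
  eq_zero : ∀ x ∉ s, f x = 0
  continuousOn : ContinuousOn f (interior s)

namespace IsContinuousDensityOn

variable {f : ℝ → ℝ} {s : Set ℝ}

lemma nonneg (hf : IsContinuousDensityOn f s) (x : ℝ) : 0 ≤ f x := by
  by_cases hx : x ∈ s
  · exact (hf.pos x hx).le
  · exact (hf.eq_zero x hx).ge

lemma ne_zero_iff (hf : IsContinuousDensityOn f s) {x : ℝ} : f x ≠ 0 ↔ x ∈ s :=
  ⟨fun h => by_contra fun hx => h (hf.eq_zero x hx), fun hx => (hf.pos x hx).ne'⟩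

lemma continuousAt (hf : IsContinuousDensityOn f s) {x : ℝ} (hx : x ∉ frontier s) :
    ContinuousAt f x := by
  by_cases hxi : x ∈ interior s
  · exact hf.continuousOn.continuousAt (isOpen_interior.mem_nhds hxi)
  · have hxc : x ∈ (closure s)ᶜ := fun hc => hx ⟨hc, hxi⟩
    refine (continuousAt_const (y := (0 : ℝ))).congr ?_
    filter_upwards [isClosed_closure.isOpen_compl.mem_nhds hxc] with y hy
    exact (hf.eq_zero y fun hys => hy (subset_closure hys)).symm

lemma aemeasurable (hf : IsContinuousDensityOn f s) (hs : volume (frontier s) = 0) :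
    AEMeasurable f := by
  have hind : AEMeasurable ((interior s).indicator f) :=
    (aemeasurable_indicator_iff isOpen_interior.measurableSet).2
      (hf.continuousOn.aemeasurable isOpen_interior.measurableSet)
  refine hind.congr (ae_eq_of_eqOn_interior_of_eqOn_compl hs
    (fun x hx => indicator_of_mem hx f) fun x hx => ?_)
  rw [indicator_of_notMem (fun hxi => hx (interior_subset hxi)), hf.eq_zero x hx]

end IsContinuousDensityOn

/-- The law on the plane of a pair of independent variables with densities `f` and `g`. -/
noncomputable def jointLaw (f g : ℝ → ℝ) : Measure (ℝ × ℝ) :=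
  volume.withDensity fun p => ENNReal.ofReal (f p.1 * g p.2)

lemma map_prodMk_eq_jointLaw {Ω : Type*} [MeasurableSpace Ω] {P : Measure Ω} [IsFiniteMeasure P]
    {X Y : Ω → ℝ} (hX : AEMeasurable X P) (hY : AEMeasurable Y P) (hXY : IndepFun X Y P)
    {f g : ℝ → ℝ} (hf : AEMeasurable f) (hg : AEMeasurable g) (hf0 : ∀ x, 0 ≤ f x)
    (hfX : P.map X = volume.withDensity fun x => ENNReal.ofReal (f x))
    (hgY : P.map Y = volume.withDensity fun y => ENNReal.ofReal (g y)) :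
    P.map (fun ω => (X ω, Y ω)) = jointLaw f g := by
  rw [(indepFun_iff_map_prod_eq_prod_map_map hX hY).1 hXY, hfX, hgY,
    prod_withDensity₀ hf.ennreal_ofReal hg.ennreal_ofReal, ← Measure.volume_eq_prod, jointLaw]
  simp only [ENNReal.ofReal_mul (hf0 _)]

section F3

lemma measurable_F3 : Measurable F3 := by
  unfold F3
  fun_prop

lemma F3_fst_add_snd (p : ℝ × ℝ) : (F3 p).1 + (F3 p).2 = p.1 + p.2 := by
  simp only [F3]
  ring

/-- The map `(x, y) ↦ (-x, y + 2 * x)`, which is `F3` on the half-plane `0 < x + y`. -/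
def negShear (p : ℝ × ℝ) : ℝ × ℝ := (-p.1, p.2 + 2 * p.1)

lemma continuous_negShear : Continuous negShear := by
  unfold negShear
  fun_prop

lemma negShear_fst_add_snd (p : ℝ × ℝ) : (negShear p).1 + (negShear p).2 = p.1 + p.2 := by
  simp only [negShear]
  ring

lemma involutive_negShear : Function.Involutive negShear := fun p => by
  simp [negShear]

lemma measurePreserving_negShear : MeasurePreserving negShear volume volume :=
  (Measure.measurePreserving_neg (volume : Measure ℝ)).skew_product
    (g := fun x y => y + 2 * x) (by fun_prop)
    (.of_forall fun x => (measurePreserving_add_right volume (2 * x)).map_eq)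

lemma F3_eq_negShear {p : ℝ × ℝ} (hp : 0 < p.1 + p.2) : F3 p = negShear p := by
  ext <;> simp only [F3, negShear, min_eq_left (show -p.1 ≤ p.2 by linarith)]
  ring

lemma F3_eq_swap {p : ℝ × ℝ} (hp : p.1 + p.2 < 0) : F3 p = p.swap := by
  ext <;> simp [F3, min_eq_right (show p.2 ≤ -p.1 by linarith)]

end F3

section DensityEquations

variable {f g : ℝ → ℝ} {s t : Set ℝ}

lemma mul_eq_mul_of_map_F3_eq_jointLaw (hf : IsContinuousDensityOn f s)
    (hg : IsContinuousDensityOn g t) (hs : volume (frontier s) = 0) (ht : volume (frontier t) = 0)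
    (hF : (jointLaw f g).map F3 = jointLaw f g)
    {L : ℝ × ℝ → ℝ × ℝ} (hL : MeasurePreserving L volume volume) (hLc : Continuous L)
    (hinv : Function.Involutive L) (hsum : ∀ p, (L p).1 + (L p).2 = p.1 + p.2)
    {I : Set ℝ} (hI : IsOpen I) (hFL : ∀ p : ℝ × ℝ, p.1 + p.2 ∈ I → F3 p = L p)
    {p : ℝ × ℝ} (hp : p.1 + p.2 ∈ I) (hp₁ : p.1 ∉ frontier s) (hp₂ : p.2 ∉ frontier t)
    (hLp₁ : (L p).1 ∉ frontier s) (hLp₂ : (L p).2 ∉ frontier t) :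
    f p.1 * g p.2 = f (L p).1 * g (L p).2 := by
  let A : Set (ℝ × ℝ) := (fun q => q.1 + q.2) ⁻¹' I
  have hA : IsOpen A := hI.preimage (by fun_prop)
  have hae := ae_eq_comp_of_map_withDensity_eq
    (p := fun q : ℝ × ℝ => ENNReal.ofReal (f q.1 * g q.2)) (A := A)
    (((hf.aemeasurable hs).comp_quasiMeasurePreserving Measure.quasiMeasurePreserving_fst).mul
      ((hg.aemeasurable ht).comp_quasiMeasurePreserving
        Measure.quasiMeasurePreserving_snd)).ennreal_ofReal
    measurable_F3 hL hinv hA.measurableSet (by simp [A, preimage_preimage, F3_fst_add_snd])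
    (by simp [A, preimage_preimage, hsum]) hFL hF
  have hcont : ∀ q : ℝ × ℝ, q.1 ∉ frontier s → q.2 ∉ frontier t →
      ContinuousAt (fun q : ℝ × ℝ => ENNReal.ofReal (f q.1 * g q.2)) q := fun q h₁ h₂ =>
    ENNReal.continuous_ofReal.continuousAt.comp
      (((hf.continuousAt h₁).comp continuousAt_fst).mul
        ((hg.continuousAt h₂).comp continuousAt_snd))
  exact (ENNReal.ofReal_eq_ofReal_iff (mul_nonneg (hf.nonneg _) (hg.nonneg _))
    (mul_nonneg (hf.nonneg _) (hg.nonneg _))).1 <|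
      eq_of_ae_eq_restrict_of_continuousAt hae (hA.mem_nhds hp) (hcont p hp₁ hp₂)
        ((hcont (L p) hLp₁ hLp₂).comp hLc.continuousAt)

variable {a b c : ℝ} (hf : IsContinuousDensityOn f (Icc (-a) b))
  (hg : IsContinuousDensityOn g (Ici (-c))) (hF : (jointLaw f g).map F3 = jointLaw f g)

include hf hg hF

lemma mul_eq_neg_mul_of_map_F3_eq_jointLaw {u v : ℝ} (huv : 0 < u + v)
    (hu : u ∉ frontier (Icc (-a) b)) (hu' : -u ∉ frontier (Icc (-a) b)) (hv : v ≠ -c)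
    (hv' : v + 2 * u ≠ -c) : f u * g v = f (-u) * g (v + 2 * u) :=
  mul_eq_mul_of_map_F3_eq_jointLaw hf hg ((convex_Icc _ _).addHaar_frontier _)
    ((convex_Ici _).addHaar_frontier _) hF measurePreserving_negShear continuous_negShear
    involutive_negShear negShear_fst_add_snd isOpen_Ioi (fun _ => F3_eq_negShear)
    (p := (u, v)) huv hu (by simpa using hv) hu' (by simpa [negShear] using hv')

lemma mul_eq_mul_swap_of_map_F3_eq_jointLaw {u v : ℝ} (huv : u + v < 0)
    (hu : u ∉ frontier (Icc (-a) b)) (hv : v ∉ frontier (Icc (-a) b)) (hu' : u ≠ -c)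
    (hv' : v ≠ -c) : f u * g v = f v * g u :=
  mul_eq_mul_of_map_F3_eq_jointLaw hf hg ((convex_Icc _ _).addHaar_frontier _)
    ((convex_Ici _).addHaar_frontier _) hF Measure.measurePreserving_swap continuous_swap
    Prod.swap_swap (fun p => add_comm p.2 p.1) isOpen_Iio (fun _ => F3_eq_swap)
    (p := (u, v)) huv hu (by simpa using hv') hv (by simpa using hu')

lemma mem_Icc_neg_of_map_F3_eq_jointLaw {u : ℝ} (hu : u ∉ frontier (Icc (-a) b))
    (hu' : -u ∉ frontier (Icc (-a) b)) (humem : u ∈ Icc (-a) b) : -u ∈ Icc (-a) b := by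
  obtain ⟨v, hv⟩ := exists_gt (max (-c) (-u) + 2 * |u|)
  have hc := le_max_left (-c) (-u)
  have hu₀ := le_max_right (-c) (-u)
  have habs := neg_abs_le u
  have habs₀ := abs_nonneg u
  have heq := mul_eq_neg_mul_of_map_F3_eq_jointLaw hf hg hF (u := u) (v := v) (by linarith) hu hu'
    (by linarith) (by linarith)
  have hne : f u * g v ≠ 0 :=
    mul_ne_zero (hf.ne_zero_iff.2 humem) (hg.ne_zero_iff.2 (mem_Ici.2 (by linarith)))
  exact hf.ne_zero_iff.1 (left_ne_zero_of_mul (heq ▸ hne))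

lemma eq_of_map_F3_eq_jointLaw (ha : 0 < a) (hb : 0 < b) : a = b := by
  have hmid : ∀ u : ℝ, |u| = (a + b) / 2 → a ≠ b → (u ∈ Icc (-a) b → -u ∈ Icc (-a) b) := by
    intro u hu hne
    have hfr : ∀ w : ℝ, |w| = (a + b) / 2 → w ∉ frontier (Icc (-a) b) := by
      intro w hw
      rw [frontier_Icc (by linarith)]
      rintro (rfl | rfl)
      · rw [abs_neg, abs_of_pos ha] at hw
        exact hne (by linarith)
      · rw [abs_of_pos hb] at hw
        exact hne (by linarith)
    exact mem_Icc_neg_of_map_F3_eq_jointLaw hf hg hF (hfr u hu) (hfr (-u) (by rwa [abs_neg]))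
  have habs : |(a + b) / 2| = (a + b) / 2 := abs_of_pos (by linarith)
  rcases lt_trichotomy a b with hab | hab | hab
  · linarith [(hmid ((a + b) / 2) habs hab.ne ⟨by linarith, by linarith⟩).1]
  · exact hab
  · linarith [(hmid (-((a + b) / 2)) (by rwa [abs_neg]) hab.ne' ⟨by linarith, by linarith⟩).2]

end DensityEquations

section Exponential

open Real

lemma eq_integral_sub_integral_div_of_increment_eq {h φ : ℝ → ℝ} {y s₀ s₁ : ℝ} (hs : s₀ < s₁)
    (hh : IntervalIntegrable h volume (y + s₀) (y + s₁))
    (hinc : ∀ s ∈ Icc s₀ s₁, h (y + s) - h y = φ s) :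
    h y = ((∫ z in (y + s₀)..(y + s₁), h z) - ∫ s in s₀..s₁, φ s) / (s₁ - s₀) := by
  have hφ : ∫ s in s₀..s₁, φ s = ∫ s in s₀..s₁, (h (y + s) - h y) :=
    intervalIntegral.integral_congr fun s hs' => (hinc s (by rwa [uIcc_of_le hs.le] at hs')).symm
  have hshift : IntervalIntegrable (fun s => h (y + s)) volume s₀ s₁ := by
    simpa only [add_sub_cancel_left] using hh.comp_add_left y
  rw [hφ, intervalIntegral.integral_sub hshift intervalIntegrable_const,
    intervalIntegral.integral_comp_add_left, intervalIntegral.integral_const, smul_eq_mul,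
    eq_div_iff (sub_pos.2 hs).ne']
  ring

lemma hasDerivAt_of_forall_increment_eq {h φ : ℝ → ℝ} {a s₀ s₁ : ℝ} (hs₀ : 0 ≤ s₀) (hs : s₀ < s₁)
    (hh : ContinuousOn h (Ioi a))
    (hinc : ∀ x, a < x → ∀ s ∈ Icc s₀ s₁, h (x + s) - h x = φ s) {x : ℝ} (hx : a < x) :
    HasDerivAt h ((φ s₁ - φ s₀) / (s₁ - s₀)) x := by
  have hint : ∀ y z, a < y → a < z → IntervalIntegrable h volume y z := fun y z hy hz =>
    (hh.mono fun w hw => (lt_min hy hz).trans_le hw.1).intervalIntegrable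
  have hprim : ∀ y, a < y → HasDerivAt (fun w => ∫ z in x..w, h z) (h y) y := fun y hy =>
    intervalIntegral.integral_hasDerivAt_right (hint x y hx hy)
      (hh.stronglyMeasurableAtFilter isOpen_Ioi y hy) (hh.continuousAt (Ioi_mem_nhds hy))
  have hderiv : HasDerivAt (fun y => ((∫ z in x..(y + s₁), h z) - (∫ z in x..(y + s₀), h z) -
      ∫ s in s₀..s₁, φ s) / (s₁ - s₀)) ((h (x + s₁) - h (x + s₀)) / (s₁ - s₀)) x :=
    ((((hprim (x + s₁) (by linarith)).comp_add_const x s₁).sub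
      ((hprim (x + s₀) (by linarith)).comp_add_const x s₀)).sub_const _).div_const _
  rw [← hinc x hx s₁ ⟨hs.le, le_rfl⟩, ← hinc x hx s₀ ⟨le_rfl, hs.le⟩, sub_sub_sub_cancel_right]
  refine hderiv.congr_of_eventuallyEq ?_
  filter_upwards [Ioi_mem_nhds hx] with y hy
  have hy₀ : a < y + s₀ := by linarith [mem_Ioi.1 hy]
  have hy₁ : a < y + s₁ := by linarith
  rw [eq_integral_sub_integral_div_of_increment_eq hs (hint _ _ hy₀ hy₁) (hinc y hy),
    intervalIntegral.integral_interval_sub_left (hint _ _ hx hy₁) (hint _ _ hx hy₀)]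

lemma eqOn_const_mul_exp_of_hasDerivAt_log {g : ℝ → ℝ} {q : ℝ} {s : Set ℝ} (hs : IsOpen s)
    (hs' : IsPreconnected s) (hg : ∀ x ∈ s, 0 < g x)
    (hq : ∀ x ∈ s, HasDerivAt (fun y => log (g y)) q x) {x₀ : ℝ} (hx₀ : x₀ ∈ s) :
    EqOn g (fun x => g x₀ * exp (q * (x - x₀))) s := by
  have hlin : ∀ x, HasDerivAt (fun y => log (g x₀) + q * (y - x₀)) q x := fun x => by
    simpa using (((hasDerivAt_id x).sub_const x₀).const_mul q).const_add (log (g x₀))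
  have hlog : EqOn (fun y => log (g y)) (fun y => log (g x₀) + q * (y - x₀)) s :=
    hs.eqOn_of_deriv_eq hs' (fun x hx => (hq x hx).differentiableAt.differentiableWithinAt)
      (fun x _ => (hlin x).differentiableAt.differentiableWithinAt)
      (fun x hx => (hq x hx).deriv.trans (hlin x).deriv.symm) hx₀ (by simp)
  intro x hx
  have hexp := congrArg exp (hlog hx)
  simpa only [exp_add, exp_log (hg _ hx), exp_log (hg _ hx₀)] using hexp

variable {f g : ℝ → ℝ} {c : ℝ}

lemma exists_hasDerivAt_log_of_mul_eq_neg_mul (hc : 0 < c) (hf : ∀ x ∈ Ioo (-c) c, 0 < f x)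
    (hg : ∀ y ∈ Ioi (-c), 0 < g y) (hgc : ContinuousOn g (Ioi (-c)))
    (hfg : ∀ u ∈ Ioo (-c) c, ∀ v ∈ Ioi (-c), 0 < u + v → f u * g v = f (-u) * g (v + 2 * u)) :
    ∃ q, ∀ y ∈ Ioi (-c), HasDerivAt (fun z => log (g z)) q y := by
  let φ : ℝ → ℝ := fun s => log (f (s / 2)) - log (f (-(s / 2)))
  have hinc : ∀ s ∈ Ioo 0 (2 * c), ∀ v, -(s / 2) < v → log (g (v + s)) - log (g v) = φ s := by
    intro s hs v hv
    have hs₀ := hs.1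
    have hs₁ := hs.2
    have hu : s / 2 ∈ Ioo (-c) c := ⟨by linarith, by linarith⟩
    have hu' : -(s / 2) ∈ Ioo (-c) c := ⟨by linarith, by linarith⟩
    have hvc : v ∈ Ioi (-c) := mem_Ioi.2 (by linarith)
    have hvs : v + s ∈ Ioi (-c) := mem_Ioi.2 (by linarith)
    have heq := congrArg log (hfg (s / 2) hu v hvc (by linarith))
    rw [mul_div_cancel₀ s two_ne_zero, log_mul (hf _ hu).ne' (hg _ hvc).ne',
      log_mul (hf _ hu').ne' (hg _ hvs).ne'] at heq
    linarith
  have hlogc : ContinuousOn (fun z => log (g z)) (Ioi (-c)) :=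
    hgc.log fun y hy => (hg y hy).ne'
  have hderiv : ∀ s₀ ∈ Ioo 0 (2 * c), ∀ s₁ ∈ Ioo s₀ (2 * c), ∀ y, -(s₀ / 2) < y →
      HasDerivAt (fun z => log (g z)) ((φ s₁ - φ s₀) / (s₁ - s₀)) y := by
    intro s₀ hs₀ s₁ hs₁ y hy
    refine hasDerivAt_of_forall_increment_eq hs₀.1.le hs₁.1
      (hlogc.mono (Ioi_subset_Ioi (by linarith [hs₀.2]))) (fun v hv s hs => ?_) hy
    exact hinc s ⟨hs₀.1.trans_le hs.1, hs.2.trans_lt hs₁.2⟩ v (by linarith [hs.1])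
  refine ⟨deriv (fun z => log (g z)) 0, fun y hy => ?_⟩
  obtain ⟨s₀, hs₀, hs₀c⟩ : ∃ s₀, max 0 (-(2 * y)) < s₀ ∧ s₀ < 2 * c :=
    exists_between (max_lt (by linarith) (by linarith [mem_Ioi.1 hy]))
  obtain ⟨hs₀pos, hs₀y⟩ := max_lt_iff.1 hs₀
  obtain ⟨s₁, hs₁⟩ := nonempty_Ioo.2 hs₀c
  rw [(hderiv s₀ ⟨hs₀pos, hs₀c⟩ s₁ hs₁ 0 (by linarith)).deriv]
  exact hderiv s₀ ⟨hs₀pos, hs₀c⟩ s₁ hs₁ y (by linarith)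

lemma mul_eq_mul_zero_of_mul_eq_swap (hc : 0 < c) (hg : ∀ y ∈ Ioi (-c), 0 < g y)
    (hfg : ∀ u ∈ Ioo (-c) c, ∀ v ∈ Ioo (-c) c, u + v < 0 → f u * g v = f v * g u)
    {x : ℝ} (hx : x ∈ Ioo (-c) c) : f x * g 0 = f 0 * g x := by
  obtain ⟨v, hcv, hv⟩ : ∃ v, -c < v ∧ v < min 0 (-x) :=
    exists_between (lt_min (by linarith) (by linarith [hx.2]))
  obtain ⟨hv₀, hvx⟩ := lt_min_iff.1 hv
  have hvc : v ∈ Ioo (-c) c := ⟨hcv, by linarith⟩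
  have hxv := hfg x hx v hvc (by linarith)
  have h0v := hfg 0 ⟨by linarith, hc⟩ v hvc (by linarith)
  refine mul_right_cancel₀ (hg v hcv).ne' ?_
  linear_combination g 0 * hxv - g x * h0v

theorem exists_eq_mul_exp_of_density_equations (hc : 0 < c) (hf : ∀ x ∈ Ioo (-c) c, 0 < f x)
    (hg : ∀ y ∈ Ioi (-c), 0 < g y) (hgc : ContinuousOn g (Ioi (-c)))
    (hshear : ∀ u ∈ Ioo (-c) c, ∀ v ∈ Ioi (-c), 0 < u + v → f u * g v = f (-u) * g (v + 2 * u))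
    (hswap : ∀ u ∈ Ioo (-c) c, ∀ v ∈ Ioo (-c) c, u + v < 0 → f u * g v = f v * g u) :
    ∃ l, (∀ x ∈ Ioo (-c) c, f x = f 0 * exp (-(l * x))) ∧
      ∀ y ∈ Ioi (-c), g y = g 0 * exp (-(l * y)) := by
  obtain ⟨q, hq⟩ := exists_hasDerivAt_log_of_mul_eq_neg_mul hc hf hg hgc hshear
  have h0 : (0 : ℝ) ∈ Ioi (-c) := neg_lt_zero.2 hc
  have hgexp : ∀ y ∈ Ioi (-c), g y = g 0 * exp (-(-q * y)) := fun y hy => by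
    simpa using eqOn_const_mul_exp_of_hasDerivAt_log isOpen_Ioi isPreconnected_Ioi hg hq h0 hy
  refine ⟨-q, fun x hx => mul_right_cancel₀ (hg 0 h0).ne' ?_, hgexp⟩
  rw [mul_eq_mul_zero_of_mul_eq_swap hc hg hswap hx, hgexp x hx.1]
  ring

theorem exists_eq_mul_exp_of_map_F3_eq_jointLaw (hc : 0 < c)
    (hf : IsContinuousDensityOn f (Icc (-c) c)) (hg : IsContinuousDensityOn g (Ici (-c)))
    (hF : (jointLaw f g).map F3 = jointLaw f g) :
    ∃ l, (∀ x ∈ Ioo (-c) c, f x = f 0 * exp (-(l * x))) ∧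
      ∀ y ∈ Ioi (-c), g y = g 0 * exp (-(l * y)) := by
  have hfr : ∀ u ∈ Ioo (-c) c, u ∉ frontier (Icc (-c) c) := fun u hu =>
    disjoint_left.1 disjoint_interior_frontier (interior_Icc (a := -c) ▸ hu)
  refine exists_eq_mul_exp_of_density_equations hc (fun x hx => hf.pos x (Ioo_subset_Icc_self hx))
    (fun y hy => hg.pos y (Ioi_subset_Ici_self hy)) (interior_Ici (a := -c) ▸ hg.continuousOn)
    (fun u hu v hv huv => ?_) (fun u hu v hv huv => ?_)
  · exact mul_eq_neg_mul_of_map_F3_eq_jointLaw hf hg hF huv (hfr u hu)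
      (hfr (-u) ⟨neg_lt_neg hu.2, neg_lt.1 hu.1⟩) (mem_Ioi.1 hv).ne' (by linarith [hu.1])
  · exact mul_eq_mul_swap_of_map_F3_eq_jointLaw hf hg hF huv (hfr u hu) (hfr v hv) hu.1.ne' hv.1.ne'

end Exponential

section Normalization

open Real

lemma pos_of_integrableOn_exp_neg_mul_Ioi {a l : ℝ}
    (h : IntegrableOn (fun x => exp (-(l * x))) (Ioi a)) : 0 < l := by
  by_contra! hl
  have hone : IntegrableOn (fun _ => (1 : ℝ)) (Ioi (max a 0)) := by
    refine (h.mono_set (Ioi_subset_Ioi (le_max_left a 0))).mono' aestronglyMeasurable_const ?_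
    refine (ae_restrict_mem measurableSet_Ioi).mono fun x hx => ?_
    have hx₀ : 0 ≤ x := (le_max_right a 0).trans (mem_Ioi.1 hx).le
    rw [norm_one]
    exact one_le_exp (neg_nonneg.2 (mul_nonpos_of_nonpos_of_nonneg hl hx₀))
  simp [integrableOn_const_iff] at hone

lemma pos_of_eq_mul_exp_on_Ioi {g : ℝ → ℝ} {a l K : ℝ} {μ : Measure ℝ} [IsFiniteMeasure μ]
    (hμ : μ = volume.withDensity fun y => ENNReal.ofReal (g y))
    (hg : IsContinuousDensityOn g (Ici a)) (hK : K ≠ 0)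
    (hexp : ∀ y ∈ Ioi a, g y = K * exp (-(l * y))) : 0 < l := by
  have hint : Integrable g := by
    refine (lintegral_ofReal_ne_top_iff_integrable
      (hg.aemeasurable ((convex_Ici a).addHaar_frontier _)).aestronglyMeasurable
      (.of_forall hg.nonneg)).1 ?_
    rw [← setLIntegral_univ, ← withDensity_apply _ .univ, ← hμ]
    exact measure_ne_top _ _
  refine pos_of_integrableOn_exp_neg_mul_Ioi (a := a) ?_
  have := (hint.integrableOn.congr_fun hexp measurableSet_Ioi).const_mul K⁻¹
  simpa only [IntegrableOn, inv_mul_cancel_left₀ hK] using this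

lemma eq_withDensity_ofReal_of_ae_eq_const_mul {α : Type*} [MeasurableSpace α] {μ ν : Measure α}
    [IsProbabilityMeasure ν] {f h : α → ℝ} {a : ℝ}
    [IsProbabilityMeasure (μ.withDensity fun x => ENNReal.ofReal (h x))]
    (hν : ν = μ.withDensity fun x => ENNReal.ofReal (f x)) (ha : 0 ≤ a)
    (hfh : f =ᵐ[μ] fun x => a * h x) :
    ν = μ.withDensity fun x => ENNReal.ofReal (h x) := by
  have hsmul : ν = ENNReal.ofReal a • μ.withDensity fun x => ENNReal.ofReal (h x) := by
    rw [hν, ← withDensity_smul' _ _ ENNReal.ofReal_ne_top]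
    refine withDensity_congr_ae (hfh.mono fun x hx => ?_)
    simp only [hx, ENNReal.ofReal_mul ha, Pi.smul_apply, smul_eq_mul]
  have hmass : ENNReal.ofReal a = 1 := by
    simpa using (congrArg (fun m : Measure α => m univ) hsmul).symm
  rw [hsmul, hmass, one_smul]

lemma isProbabilityMeasure_sExpPdf {l : ℝ} (hl : 0 < l) (c : ℝ) :
    IsProbabilityMeasure (volume.withDensity fun x => ENNReal.ofReal (sExpPdf l c x)) := by
  have heq : ∀ x, ENNReal.ofReal (sExpPdf l c x) = exponentialPDF l (x - c) := fun x => by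
    rw [exponentialPDF_eq, sExpPdf]
    simp only [sub_nonneg]
    congr 2
    rw [mul_sub, neg_sub, sub_eq_neg_add, exp_add, exp_neg (l * c)]
    field_simp
  constructor
  rw [withDensity_apply _ .univ, setLIntegral_univ]
  simp only [heq]
  rw [lintegral_sub_right_eq_self, lintegral_exponentialPDF_eq_one hl]

lemma integral_exp_neg_mul_Icc {l : ℝ} (hl : l ≠ 0) {c₁ c₂ : ℝ} (hc : c₁ ≤ c₂) :
    ∫ x in Icc c₁ c₂, exp (-(l * x)) = 1 / l * (exp (-(l * c₁)) - exp (-(l * c₂))) := by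
  simp only [← neg_mul]
  rw [integral_Icc_eq_integral_Ioc, ← intervalIntegral.integral_of_le hc,
    intervalIntegral.integral_comp_mul_left _ (neg_ne_zero.2 hl), integral_exp, smul_eq_mul]
  ring

lemma stExpPdf_normalizer_pos {l c₁ c₂ : ℝ} (hl : 0 < l) (hc : c₁ < c₂) :
    0 < 1 / l * (exp (-(l * c₁)) - exp (-(l * c₂))) :=
  mul_pos (one_div_pos.2 hl) (sub_pos.2 (exp_lt_exp.2 (neg_lt_neg (by gcongr))))

lemma isProbabilityMeasure_stExpPdf {l c₁ c₂ : ℝ} (hl : 0 < l) (hc : c₁ < c₂) :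
    IsProbabilityMeasure (volume.withDensity fun x => ENNReal.ofReal (stExpPdf l c₁ c₂ x)) := by
  have hZ := stExpPdf_normalizer_pos hl hc
  have hind : stExpPdf l c₁ c₂ = (Icc c₁ c₂).indicator fun x =>
      exp (-(l * x)) / (1 / l * (exp (-(l * c₁)) - exp (-(l * c₂)))) := by
    ext x
    simp only [stExpPdf, indicator_apply, mem_Icc]
  have hcont : Continuous fun x => exp (-(l * x)) := by fun_prop
  have hint : Integrable (stExpPdf l c₁ c₂) := by
    rw [hind, integrable_indicator_iff measurableSet_Icc]
    exact (hcont.div_const _).integrableOn_Icc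
  have hnonneg : ∀ x, 0 ≤ stExpPdf l c₁ c₂ x := fun x => by
    rw [hind]
    exact indicator_nonneg (fun y _ => div_nonneg (exp_pos _).le hZ.le) x
  constructor
  rw [withDensity_apply _ .univ, setLIntegral_univ,
    ← ofReal_integral_eq_lintegral_ofReal hint (.of_forall hnonneg), hind,
    integral_indicator measurableSet_Icc, integral_div, integral_exp_neg_mul_Icc hl.ne' hc.le,
    div_self hZ.ne', ENNReal.ofReal_one]

variable {μ : Measure ℝ} [IsProbabilityMeasure μ] {f : ℝ → ℝ} {l M : ℝ}

lemma eq_withDensity_stExpPdf {c₁ c₂ : ℝ} (hl : 0 < l) (hc : c₁ < c₂)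
    (hf : IsContinuousDensityOn f (Icc c₁ c₂))
    (hμ : μ = volume.withDensity fun x => ENNReal.ofReal (f x)) (hM : 0 ≤ M)
    (hexp : ∀ x ∈ Ioo c₁ c₂, f x = M * exp (-(l * x))) :
    μ = volume.withDensity fun x => ENNReal.ofReal (stExpPdf l c₁ c₂ x) := by
  have hZ := stExpPdf_normalizer_pos hl hc
  have := isProbabilityMeasure_stExpPdf hl hc
  refine eq_withDensity_ofReal_of_ae_eq_const_mul hμ (mul_nonneg hM hZ.le)
    (ae_eq_of_eqOn_interior_of_eqOn_compl ((convex_Icc c₁ c₂).addHaar_frontier _)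
      (fun x hx => ?_) fun x hx => ?_)
  · rw [interior_Icc] at hx
    rw [hexp x hx, stExpPdf, if_pos ⟨hx.1.le, hx.2.le⟩, mul_assoc, mul_div_cancel₀ _ hZ.ne']
  · rw [hf.eq_zero x hx, stExpPdf, if_neg (mt mem_Icc.2 hx), mul_zero]

lemma eq_withDensity_sExpPdf {c : ℝ} (hl : 0 < l) (hf : IsContinuousDensityOn f (Ici c))
    (hμ : μ = volume.withDensity fun x => ENNReal.ofReal (f x)) (hM : 0 ≤ M)
    (hexp : ∀ x ∈ Ioi c, f x = M * exp (-(l * x))) :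
    μ = volume.withDensity fun x => ENNReal.ofReal (sExpPdf l c x) := by
  have hZ : 0 < 1 / l * exp (-(l * c)) := mul_pos (one_div_pos.2 hl) (exp_pos _)
  have := isProbabilityMeasure_sExpPdf hl c
  refine eq_withDensity_ofReal_of_ae_eq_const_mul hμ (mul_nonneg hM hZ.le)
    (ae_eq_of_eqOn_interior_of_eqOn_compl ((convex_Ici c).addHaar_frontier _)
      (fun x hx => ?_) fun x hx => ?_)
  · rw [interior_Ici] at hx
    rw [hexp x hx, sExpPdf, if_pos (mem_Ioi.1 hx).le, mul_assoc, mul_div_cancel₀ _ hZ.ne']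
  · rw [hf.eq_zero x hx, sExpPdf, if_neg (mt mem_Ici.2 hx), mul_zero]

end Normalization

theorem sExp_stationary_characterization_general
    {Ω : Type*} [MeasurableSpace Ω] {P : Measure Ω} [IsProbabilityMeasure P]
    {c₁ c₂ : ℝ} (hc₁ : 0 < c₁) (hc₂ : 0 < c₂)
    {X Y : Ω → ℝ} (hXm : AEMeasurable X P) (hYm : AEMeasurable Y P) (hIndep : IndepFun X Y P)
    {fX fY : ℝ → ℝ}
    (hX : P.map X = volume.withDensity (fun x => ENNReal.ofReal (fX x)))
    (hY : P.map Y = volume.withDensity (fun y => ENNReal.ofReal (fY y)))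
    (hfX : IsContinuousDensityOn fX (Icc (-c₁) c₂)) (hfY : IsContinuousDensityOn fY (Ici (-c₂)))
    (hSameDist : P.map (fun ω => F3 (X ω, Y ω)) = P.map (fun ω => (X ω, Y ω))) :
    ∃ (l c : ℝ), 0 < l ∧ 0 < c ∧
      P.map X = volume.withDensity (fun x => ENNReal.ofReal (stExpPdf l (-c) c x)) ∧
      P.map Y = volume.withDensity (fun y => ENNReal.ofReal (sExpPdf l (-c) y)) := by
  have hlaw : P.map (fun ω => (X ω, Y ω)) = jointLaw fX fY :=
    map_prodMk_eq_jointLaw hXm hYm hIndep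
      (hfX.aemeasurable ((convex_Icc _ _).addHaar_frontier _))
      (hfY.aemeasurable ((convex_Ici _).addHaar_frontier _)) hfX.nonneg hX hY
  have hF : (jointLaw fX fY).map F3 = jointLaw fX fY := by
    rw [← hlaw, AEMeasurable.map_map_of_aemeasurable measurable_F3.aemeasurable
      (hXm.prodMk hYm)]
    exact hSameDist
  obtain rfl : c₁ = c₂ := eq_of_map_F3_eq_jointLaw hfX hfY hF hc₁ hc₂
  obtain ⟨l, hfXexp, hfYexp⟩ := exists_eq_mul_exp_of_map_F3_eq_jointLaw hc₁ hfX hfY hF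
  have := Measure.isProbabilityMeasure_map hXm
  have := Measure.isProbabilityMeasure_map hYm
  have hl : 0 < l :=
    pos_of_eq_mul_exp_on_Ioi hY hfY (hfY.pos 0 (neg_nonpos.2 hc₁.le)).ne' hfYexp
  exact ⟨l, c₁, hl, hc₁,
    eq_withDensity_stExpPdf hl (neg_lt_self hc₁) hfX hX (hfX.nonneg 0) hfXexp,
    eq_withDensity_sExpPdf hl hfY hY (hfY.nonneg 0) hfYexp⟩

theorem sExp_stationary_characterization
    {Ω : Type*} [MeasureSpace Ω] [IsProbabilityMeasure (ℙ : Measure Ω)]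
    (c₁ c₂ : ℝ) (hc₁ : 0 < c₁) (hc₂ : 0 < c₂)
    (X Y : Ω → ℝ) (hXm : Measurable X) (hYm : Measurable Y)
    (hIndep : IndepFun X Y ℙ)
    (fX fY : ℝ → ℝ)
    (hfX : Measure.map X ℙ = volume.withDensity (fun x => ENNReal.ofReal (fX x)))
    (hfY : Measure.map Y ℙ = volume.withDensity (fun x => ENNReal.ofReal (fY x)))
    (hfXpos : ∀ x, 0 < fX x ↔ x ∈ Icc (-c₁) c₂)
    (hfYpos : ∀ y, 0 < fY y ↔ y ∈ Ici (-c₂))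
    (hfXzero : ∀ x ∉ Icc (-c₁) c₂, fX x = 0)
    (hfYzero : ∀ y ∉ Ici (-c₂), fY y = 0)
    (hfXdiff : ∀ x ∈ Ioo (-c₁) c₂,
      DifferentiableAt ℝ fX x ∧ DifferentiableAt ℝ (deriv fX) x)
    (hfYdiff : ∀ y ∈ Ioi (-c₂),
      DifferentiableAt ℝ fY y ∧ DifferentiableAt ℝ (deriv fY) y)
    (hUVindep :
      IndepFun (fun ω => (F3 (X ω, Y ω)).1) (fun ω => (F3 (X ω, Y ω)).2) ℙ)
    (hSameDist :
      Measure.map (fun ω => F3 (X ω, Y ω)) ℙ = Measure.map (fun ω => (X ω, Y ω)) ℙ) :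
    ∃ (l c : ℝ), 0 < l ∧ 0 < c ∧
      Measure.map X ℙ =
        volume.withDensity (fun x => ENNReal.ofReal (stExpPdf l (-c) c x)) ∧
      Measure.map Y ℙ =
        volume.withDensity (fun y => ENNReal.ofReal (sExpPdf l (-c) y)) :=
  sExp_stationary_characterization_general hc₁ hc₂ hXm.aemeasurable hYm.aemeasurable hIndep hfX hfY
    ⟨fun x => (hfXpos x).2, hfXzero, fun x hx =>
      (hfXdiff x (interior_Icc (a := -c₁) ▸ hx)).1.continuousAt.continuousWithinAt⟩
    ⟨fun y => (hfYpos y).2, hfYzero, fun y hy =>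
      (hfYdiff y (interior_Ici (a := -c₂) ▸ hy)).1.continuousAt.continuousWithinAt⟩ hSameDist
end

section
/- Let F₂(x,y) = (min{x,0} − y, min{x,y,0} − x − y), and let O ⊂ ℝ² be the union of the five open regions {x>0, y>0}, {x<0, y>0}, {x<y<0}, {y<x<0}, and {x>0, y<0}. Then F₂ maps O into O and is an involution on O: F₂(F₂(x,y)) = (x,y) for all (x,y) ∈ O. Moreover, F₂ maps {x>0,y>0} onto {y<x<0}, maps {x<0,y>0} onto {x<y<0}, and maps {x>0,y<0} onto itself. The complement ℝ² \ O has Lebesgue measure zero. -/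
open MeasureTheory Set

/-- The transformation F₂. -/
noncomputable def F2 : ℝ × ℝ → ℝ × ℝ := fun p =>
  (min p.1 0 - p.2, min (min p.1 p.2) 0 - p.1 - p.2)

/-- Region ①: x > 0, y > 0. -/
def R1 : Set (ℝ × ℝ) := {p | 0 < p.1 ∧ 0 < p.2}
/-- Region ②: x < 0, y > 0. -/
def R2 : Set (ℝ × ℝ) := {p | p.1 < 0 ∧ 0 < p.2}
/-- Region ③: x < y < 0. -/
def R3 : Set (ℝ × ℝ) := {p | p.1 < p.2 ∧ p.2 < 0}
/-- Region ④: y < x < 0. -/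
def R4 : Set (ℝ × ℝ) := {p | p.2 < p.1 ∧ p.1 < 0}
/-- Region ⑤: x > 0, y < 0. -/
def R5 : Set (ℝ × ℝ) := {p | 0 < p.1 ∧ p.2 < 0}

/-- The union of the five open regions. -/
def O : Set (ℝ × ℝ) := R1 ∪ R2 ∪ R3 ∪ R4 ∪ R5

/-!
Write `(a, b) = F2 (x, y)` and `m = min{x, y, 0}`. Then `min a 0 = m - y` and
`min{a, b, 0} = b + min x 0`, whence `min a 0 - b = x` and `min{a, b, 0} - a - b = min x 0 - a = y`:
`F2` is an involution of the whole plane. It is linear on each of four closed cones, and these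
linear formulas show where the regions go. Outside `O`, one of the forms `x`, `y`, `x - y` vanishes.
-/

section Involution

theorem min_min_zero_sub_zero {G : Type*} [AddCommGroup G] [LinearOrder G]
    [IsOrderedAddMonoid G] (x y : G) : min (min x 0 - y) 0 = min (min x y) 0 - y :=
  calc
    min (min x 0 - y) 0 = min (min x 0 - y) (y - y) := by rw [sub_self]
    _ = min (min x 0) y - y := min_sub_sub_right _ _ _
    _ = min (min x y) 0 - y := by rw [min_right_comm]

theorem min_sub_sub_sub_eq_add_min {G : Type*} [AddCommGroup G] [LinearOrder G]
    [IsOrderedAddMonoid G] (m x y : G) :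
    min (m - y) (m - x - y) = m - x - y + min x 0 := by
  rw [← min_add_add_left, add_zero, sub_right_comm, sub_add_cancel]

theorem F2_involutive : Function.Involutive F2 := by
  rintro ⟨x, y⟩
  set m := min (min x y) 0 with hm
  have min_fst : min (min x 0 - y) 0 = m - y := min_min_zero_sub_zero x y
  have min_fst_snd : min (min (min x 0 - y) (m - x - y)) 0 = m - x - y + min x 0 := by
    rw [min_right_comm, min_fst, min_sub_sub_sub_eq_add_min]
  simp only [F2, ← hm, min_fst, min_fst_snd, Prod.mk.injEq]
  constructor <;> ring

theorem image_eq_of_involutive_of_mapsTo {α : Type*} {f : α → α} {s t : Set α}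
    (hf : Function.Involutive f) (hst : MapsTo f s t) (hts : MapsTo f t s) : f '' s = t :=
  hst.image_subset.antisymm fun a ha => ⟨f a, hts ha, hf a⟩

end Involution

section Regions

variable {x y : ℝ}

theorem F2_of_nonneg_of_nonneg (hx : 0 ≤ x) (hy : 0 ≤ y) : F2 (x, y) = (-y, -x - y) := by
  simp only [F2, min_eq_right hx, min_eq_right (le_min hx hy), zero_sub]

theorem F2_of_nonpos_of_le (hx : x ≤ 0) (hxy : x ≤ y) : F2 (x, y) = (x - y, -y) := by
  simp only [F2, min_eq_left hx, min_eq_left hxy, sub_self, zero_sub]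

theorem F2_of_le_of_nonpos (hyx : y ≤ x) (hx : x ≤ 0) : F2 (x, y) = (x - y, -x) := by
  simp only [F2, min_eq_left hx, min_eq_right hyx, min_eq_left (hyx.trans hx),
    sub_right_comm y x y, sub_self, zero_sub]

theorem F2_of_nonneg_of_nonpos (hx : 0 ≤ x) (hy : y ≤ 0) : F2 (x, y) = (-y, -x) := by
  simp only [F2, min_eq_right hx, min_eq_right (hy.trans hx), min_eq_left hy,
    sub_right_comm y x y, sub_self, zero_sub]

theorem mapsTo_F2_R1_R4 : MapsTo F2 R1 R4 := by
  rintro ⟨x, y⟩ ⟨hx : 0 < x, hy : 0 < y⟩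
  rw [F2_of_nonneg_of_nonneg hx.le hy.le]
  constructor <;> dsimp only <;> linarith

theorem mapsTo_F2_R4_R1 : MapsTo F2 R4 R1 := by
  rintro ⟨x, y⟩ ⟨hyx : y < x, hx : x < 0⟩
  rw [F2_of_le_of_nonpos hyx.le hx.le]
  exact ⟨sub_pos.2 hyx, neg_pos.2 hx⟩

theorem mapsTo_F2_R2_R3 : MapsTo F2 R2 R3 := by
  rintro ⟨x, y⟩ ⟨hx : x < 0, hy : 0 < y⟩
  rw [F2_of_nonpos_of_le hx.le (hx.trans hy).le]
  constructor <;> dsimp only <;> linarith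

theorem mapsTo_F2_R3_R2 : MapsTo F2 R3 R2 := by
  rintro ⟨x, y⟩ ⟨hxy : x < y, hy : y < 0⟩
  rw [F2_of_nonpos_of_le (hxy.trans hy).le hxy.le]
  exact ⟨sub_neg.2 hxy, neg_pos.2 hy⟩

theorem mapsTo_F2_R5_R5 : MapsTo F2 R5 R5 := by
  rintro ⟨x, y⟩ ⟨hx : 0 < x, hy : y < 0⟩
  rw [F2_of_nonneg_of_nonpos hx.le hy.le]
  exact ⟨neg_pos.2 hy, neg_neg_of_pos hx⟩

theorem image_F2_R1 : F2 '' R1 = R4 :=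
  image_eq_of_involutive_of_mapsTo F2_involutive mapsTo_F2_R1_R4 mapsTo_F2_R4_R1

theorem image_F2_R2 : F2 '' R2 = R3 :=
  image_eq_of_involutive_of_mapsTo F2_involutive mapsTo_F2_R2_R3 mapsTo_F2_R3_R2

theorem image_F2_R3 : F2 '' R3 = R2 :=
  image_eq_of_involutive_of_mapsTo F2_involutive mapsTo_F2_R3_R2 mapsTo_F2_R2_R3

theorem image_F2_R4 : F2 '' R4 = R1 :=
  image_eq_of_involutive_of_mapsTo F2_involutive mapsTo_F2_R4_R1 mapsTo_F2_R1_R4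

theorem image_F2_R5 : F2 '' R5 = R5 :=
  image_eq_of_involutive_of_mapsTo F2_involutive mapsTo_F2_R5_R5 mapsTo_F2_R5_R5

theorem image_F2_O : F2 '' O = O := by
  simp only [O, image_union, image_F2_R1, image_F2_R2, image_F2_R3, image_F2_R4, image_F2_R5]
  ac_rfl

end Regions

section Measure

theorem addHaar_ker_eq_zero {E F : Type*} [NormedAddCommGroup E] [NormedSpace ℝ E]
    [MeasurableSpace E] [BorelSpace E] [FiniteDimensional ℝ E] [AddCommGroup F] [Module ℝ F]
    (μ : Measure E) [μ.IsAddHaarMeasure] {f : E →ₗ[ℝ] F} (hf : f ≠ 0) : μ (LinearMap.ker f) = 0 :=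
  Measure.addHaar_submodule μ _ fun h => hf (LinearMap.ker_eq_top.1 h)

theorem mem_O_of_ne {x y : ℝ} (hx : x ≠ 0) (hy : y ≠ 0) (hxy : x ≠ y) : (x, y) ∈ O := by
  rcases hx.lt_or_gt with x_neg | x_pos <;> rcases hy.lt_or_gt with y_neg | y_pos
  · rcases hxy.lt_or_gt with x_lt_y | y_lt_x
    · exact .inl (.inl (.inr ⟨x_lt_y, y_neg⟩))
    · exact .inl (.inr ⟨y_lt_x, x_neg⟩)
  · exact .inl (.inl (.inl (.inr ⟨x_neg, y_pos⟩)))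
  · exact .inr ⟨x_pos, y_neg⟩
  · exact .inl (.inl (.inl (.inl ⟨x_pos, y_pos⟩)))

theorem compl_O_subset_union_ker :
    Oᶜ ⊆ LinearMap.ker (LinearMap.fst ℝ ℝ ℝ) ∪ LinearMap.ker (LinearMap.snd ℝ ℝ ℝ) ∪
      LinearMap.ker (LinearMap.fst ℝ ℝ ℝ - LinearMap.snd ℝ ℝ ℝ) := by
  rintro ⟨x, y⟩ hp
  contrapose! hp
  simp only [mem_union, SetLike.mem_coe, LinearMap.mem_ker, LinearMap.sub_apply,
    LinearMap.fst_apply, LinearMap.snd_apply, sub_eq_zero, not_or] at hp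
  obtain ⟨⟨hx, hy⟩, hxy⟩ := hp
  exact notMem_compl_iff.2 (mem_O_of_ne hx hy hxy)

theorem volume_compl_O : volume Oᶜ = 0 := by
  have fst_ne : LinearMap.fst ℝ ℝ ℝ ≠ 0 := fun h => by simpa using DFunLike.congr_fun h (1, 0)
  have snd_ne : LinearMap.snd ℝ ℝ ℝ ≠ 0 := fun h => by simpa using DFunLike.congr_fun h (0, 1)
  have sub_ne : LinearMap.fst ℝ ℝ ℝ - LinearMap.snd ℝ ℝ ℝ ≠ 0 := fun h => by
    simpa using DFunLike.congr_fun h (1, 0)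
  exact measure_mono_null compl_O_subset_union_ker <| measure_union_null
    (measure_union_null (addHaar_ker_eq_zero _ fst_ne) (addHaar_ker_eq_zero _ snd_ne))
    (addHaar_ker_eq_zero _ sub_ne)

end Measure

theorem F2_involution_on_O_general :
    Function.Involutive F2 ∧
    F2 '' O = O ∧
    F2 '' R1 = R4 ∧
    F2 '' R2 = R3 ∧
    F2 '' R5 = R5 ∧
    volume Oᶜ = 0 :=
  ⟨F2_involutive, image_F2_O, image_F2_R1, image_F2_R2, image_F2_R5, volume_compl_O⟩

theorem F2_involution_on_O :
    (∀ p ∈ O, F2 p ∈ O) ∧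
    (∀ p ∈ O, F2 (F2 p) = p) ∧
    F2 '' R1 = R4 ∧
    F2 '' R2 = R3 ∧
    F2 '' R5 = R5 ∧
    volume Oᶜ = 0 := by
  obtain ⟨invol, image_O, image_R1, image_R2, image_R5, null⟩ := F2_involution_on_O_general
  exact ⟨fun p hp => image_O ▸ mem_image_of_mem F2 hp, fun p _ => invol p,
    image_R1, image_R2, image_R5, null⟩
end

section
/- Let c₁, c₂ > 0 and let F₃(x,y) = (min{−x,y}, y + x − min{−x,y}). Then F₃ restricts to a bijection from [−c₁, c₂] × [−c₂, ∞) onto [−c₂, c₁] × [−c₁, ∞). -/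
open Set

/-!
`F3` preserves `x + y` and is linear on each side of the line `x + y = 0`, where it is one of the
linear involutions `(x, y) ↦ (-x, y + 2x)` and `(x, y) ↦ (y, x)`. Hence `F3` is an involution, and
as the source and target regions are exchanged by swapping `c₁` and `c₂`, it suffices that `F3`
maps one into the other.
-/

theorem F3_of_add_nonneg {x y : ℝ} (h : 0 ≤ x + y) : F3 (x, y) = (-x, y + 2 * x) := by
  have hmin : min (-x) y = -x := min_eq_left (neg_le_iff_add_nonneg'.2 h)
  ext <;> simp only [F3, hmin]
  ring

theorem F3_of_add_nonpos {x y : ℝ} (h : x + y ≤ 0) : F3 (x, y) = (y, x) := by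
  have hmin : min (-x) y = y := min_eq_right (by linarith)
  simp only [F3, hmin, add_sub_cancel_left]

theorem F3_involutive : Function.Involutive F3 := by
  rintro ⟨x, y⟩
  rcases le_total 0 (x + y) with h | h
  · have h' : 0 ≤ -x + (y + 2 * x) := by linarith
    rw [F3_of_add_nonneg h, F3_of_add_nonneg h']
    ext <;> ring
  · rw [F3_of_add_nonpos h, F3_of_add_nonpos (by rwa [add_comm])]

theorem F3_mapsTo (a b : ℝ) :
    MapsTo F3 (Icc (-a) b ×ˢ Ici (-b)) (Icc (-b) a ×ˢ Ici (-a)) := by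
  rintro ⟨x, y⟩ ⟨⟨hax, hxb⟩, hby⟩
  simp only [mem_Ici] at hax hxb hby
  rcases le_total 0 (x + y) with h | h
  · rw [F3_of_add_nonneg h]
    refine ⟨⟨neg_le_neg hxb, neg_le.1 hax⟩, ?_⟩
    calc -a ≤ x := hax
      _ ≤ x + (x + y) := le_add_of_nonneg_right h
      _ = y + 2 * x := by ring
  · rw [F3_of_add_nonpos h]
    have hya : y ≤ a := by linarith
    exact ⟨⟨hby, hya⟩, hax⟩

theorem F3_bijOn_general (c₁ c₂ : ℝ) :
    BijOn F3 (Icc (-c₁) c₂ ×ˢ Ici (-c₂)) (Icc (-c₂) c₁ ×ˢ Ici (-c₁)) :=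
  InvOn.bijOn ⟨F3_involutive.leftInverse.leftInvOn _, F3_involutive.rightInverse.rightInvOn _⟩
    (F3_mapsTo c₁ c₂) (F3_mapsTo c₂ c₁)

theorem F3_bijOn (c₁ c₂ : ℝ) (hc₁ : 0 < c₁) (hc₂ : 0 < c₂) :
    Set.BijOn F3 (Icc (-c₁) c₂ ×ˢ Ici (-c₂)) (Icc (-c₂) c₁ ×ˢ Ici (-c₁)) :=
  F3_bijOn_general c₁ c₂
end

section
/- Let r_U, r_V, r_X, r_Y be real-valued functions with r_U, r_V twice-differentiable on (−∞,0), r_X, r_Y twice-differentiable on (0,∞), satisfying r_U(−y) + r_V(−x−y) = r_X(x) + r_Y(y) for all x > 0, y > 0. Then there exist real constants a₁, a₂, a₃ such that r_V(v) = a₁v + a₂ for all v < 0 and r_X(x) = −a₁x + a₃ for all x > 0. -/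
open Set

/-!
Writing `g z = rV (-z)`, `f = rX` and `h y = rY y - rU (-y)` turns the equation into Pexider's
equation `g (x + y) = f x + h y` on the positive half-line. Increments of `f` and `h` over steps of
equal length agree, so the increment depends on the step only and is additive in it. Near zero this
additive function is also an increment of `g`; continuity of `g` at a single point thus makes it
continuous, hence linear.
-/

open Topology

theorem sub_eq_sub_of_pexider {G E : Type*} [AddCommMonoid G] [Preorder G] [AddCommGroup E]
    {f g h : G → E} (pexider : ∀ x y, 0 < x → 0 < y → g (x + y) = f x + h y)
    {x y t : G} (hx : 0 < x) (hy : 0 < y) (hxt : 0 < x + t) (hyt : 0 < y + t) :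
    f (x + t) - f x = h (y + t) - h y := by
  rw [sub_eq_sub_iff_add_eq_add, ← pexider _ _ hxt hy, add_comm (h _), ← pexider _ _ hx hyt,
    add_right_comm, add_assoc]

theorem exists_addMonoidHom_of_sub_eq_sub {G E : Type*} [AddCommGroup G] [LinearOrder G]
    [IsOrderedAddMonoid G] [Nontrivial G] [AddCommGroup E] {f : G → E}
    (increment : ∀ x y t, 0 < x → 0 < y → 0 < x + t → 0 < y + t →
      f (x + t) - f x = f (y + t) - f y) :
    ∃ φ : G →+ E, ∀ x t, 0 < x → 0 < x + t → f (x + t) - f x = φ t := by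
  obtain ⟨e, he⟩ := exists_zero_lt (α := G)
  have base_pos (t : G) : 0 < e + |t| := add_pos_of_pos_of_nonneg he (abs_nonneg t)
  have add_pos_of_abs_lt {x t : G} (h : |t| < x) : 0 < x + t :=
    neg_lt_iff_pos_add.mp ((neg_le_abs t).trans_lt h)
  let φ (t : G) : E := f (e + |t| + t) - f (e + |t|)
  have φ_eq (x t : G) (hx : 0 < x) (hxt : 0 < x + t) : f (x + t) - f x = φ t :=
    increment _ _ _ hx (base_pos t) hxt (add_pos_of_abs_lt (lt_add_of_pos_left _ he))
  have φ_add (s t : G) : φ (s + t) = φ s + φ t := by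
    obtain ⟨x, hx, hxs, hxst⟩ : ∃ x, 0 < x ∧ 0 < x + s ∧ 0 < x + s + t := by
      have hs : 0 < e + |s| + s := add_pos_of_abs_lt (lt_add_of_pos_left _ he)
      refine ⟨e + |s| + |t|, add_pos_of_pos_of_nonneg (base_pos s) (abs_nonneg t), ?_, ?_⟩
      · rw [add_right_comm]
        exact add_pos_of_pos_of_nonneg hs (abs_nonneg t)
      · rw [add_right_comm (e + |s|)]
        exact add_pos_of_abs_lt (lt_add_of_pos_left _ hs)
    calc φ (s + t) = f (x + (s + t)) - f x := (φ_eq _ _ hx (by rwa [← add_assoc])).symm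
      _ = (f (x + s) - f x) + (f (x + s + t) - f (x + s)) := by rw [← add_assoc]; abel
      _ = φ s + φ t := by rw [φ_eq _ _ hx hxs, φ_eq _ _ hxs hxst]
  exact ⟨AddMonoidHom.mk' φ φ_add, φ_eq⟩

theorem exists_addMonoidHom_of_pexider {G E : Type*} [AddCommGroup G] [LinearOrder G]
    [IsOrderedAddMonoid G] [Nontrivial G] [AddCommGroup E] {f g h : G → E}
    (pexider : ∀ x y, 0 < x → 0 < y → g (x + y) = f x + h y) :
    ∃ φ : G →+ E, (∀ x t, 0 < x → 0 < x + t → f (x + t) - f x = φ t) ∧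
      ∀ y t, 0 < y → 0 < y + t → h (y + t) - h y = φ t := by
  have h_sub {y t : G} (hy : 0 < y) (hyt : 0 < y + t) : h (y + t) - h y = f (y + t) - f y :=
    (sub_eq_sub_of_pexider pexider hy hy hyt hyt).symm
  obtain ⟨φ, hφ⟩ := exists_addMonoidHom_of_sub_eq_sub (f := f) fun x y t hx hy hxt hyt ↦
    (sub_eq_sub_of_pexider pexider hx hy hxt hyt).trans (h_sub hy hyt)
  exact ⟨φ, hφ, fun y t hy hyt ↦ (h_sub hy hyt).trans (hφ y t hy hyt)⟩

theorem continuous_of_eventually_sub_eq {G E : Type*} [AddGroup G] [TopologicalSpace G]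
    [IsTopologicalAddGroup G] [AddGroup E] [TopologicalSpace E] [IsTopologicalAddGroup E]
    {g : G → E} {z₀ : G} {φ : G →+ E} (hg : ContinuousAt g z₀)
    (increment : ∀ᶠ t in 𝓝 0, g (z₀ + t) - g z₀ = φ t) : Continuous φ := by
  have hg₀ : ContinuousAt (fun t ↦ g (z₀ + t)) 0 :=
    ContinuousAt.comp (by rwa [add_zero]) (by fun_prop)
  exact continuous_of_continuousAt_zero φ ((hg₀.sub continuousAt_const).congr increment)

theorem eq_smul_add_of_sub_eq_smul {R E : Type*} [Ring R] [Preorder R] [AddCommGroup E] [Module R E]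
    {f : R → E} {a : E} (increment : ∀ x t, 0 < x → 0 < x + t → f (x + t) - f x = t • a)
    {x₀ x : R} (hx₀ : 0 < x₀) (hx : 0 < x) :
    f x = x • a + (f x₀ - x₀ • a) := by
  have h := increment x₀ (x - x₀) hx₀ (by rwa [add_sub_cancel])
  rw [add_sub_cancel, sub_smul] at h
  rw [sub_eq_iff_eq_add.mp h, sub_add_eq_add_sub, add_sub_assoc]

section Real

variable {E : Type*} [AddCommGroup E] [Module ℝ E] [TopologicalSpace E] [IsTopologicalAddGroup E]
  [ContinuousSMul ℝ E] [T2Space E]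

theorem exists_affine_of_pexider {f g h : ℝ → E} {z₀ : ℝ}
    (pexider : ∀ x y, 0 < x → 0 < y → g (x + y) = f x + h y)
    (hz₀ : 0 < z₀) (hg : ContinuousAt g z₀) :
    ∃ a b c : E, (∀ x, 0 < x → f x = x • a + b) ∧ (∀ y, 0 < y → h y = y • a + c) ∧
      ∀ z, 0 < z → g z = z • a + (b + c) := by
  obtain ⟨φ, f_sub, h_sub⟩ := exists_addMonoidHom_of_pexider pexider
  have g_sub : ∀ᶠ t in 𝓝 0, g (z₀ + t) - g z₀ = φ t := by
    have hz₀₂ : 0 < z₀ / 2 := half_pos hz₀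
    filter_upwards [Ioi_mem_nhds (neg_neg_of_pos hz₀₂)] with t ht
    have hxt : 0 < z₀ / 2 + t := neg_lt_iff_pos_add'.mp ht
    rw [← f_sub _ t hz₀₂ hxt, ← add_sub_add_right_eq_sub (f _) _ (h (z₀ / 2)),
      ← pexider _ _ hxt hz₀₂, ← pexider _ _ hz₀₂ hz₀₂, add_right_comm, add_halves]
  obtain ⟨a, φ_linear⟩ : ∃ a, ∀ t, φ t = t • a := by
    have φ_continuous := continuous_of_eventually_sub_eq hg g_sub
    exact ⟨φ 1, fun t ↦ by rw [← map_real_smul φ φ_continuous, smul_eq_mul, mul_one]⟩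
  simp only [φ_linear] at f_sub h_sub
  obtain ⟨b, hf⟩ : ∃ b, ∀ x, 0 < x → f x = x • a + b :=
    ⟨_, fun _ ↦ eq_smul_add_of_sub_eq_smul f_sub one_pos⟩
  obtain ⟨c, hh⟩ : ∃ c, ∀ y, 0 < y → h y = y • a + c :=
    ⟨_, fun _ ↦ eq_smul_add_of_sub_eq_smul h_sub one_pos⟩
  refine ⟨a, b, c, hf, hh, fun z hz ↦ ?_⟩
  have hz₂ : 0 < z / 2 := half_pos hz
  calc g z = f (z / 2) + h (z / 2) := by rw [← pexider _ _ hz₂ hz₂, add_halves]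
    _ = z • a + (b + c) := by
      rw [hf _ hz₂, hh _ hz₂, add_add_add_comm, ← add_smul, add_halves]

theorem al_region1_functional_equation_general {rU rV rX rY : ℝ → E} {v₀ : ℝ}
    (hv₀ : v₀ < 0) (hV : ContinuousAt rV v₀)
    (heq : ∀ x y : ℝ, 0 < x → 0 < y → rU (-y) + rV (-x - y) = rX x + rY y) :
    ∃ a₁ a₂ a₃ : E,
      (∀ v : ℝ, v < 0 → rV v = v • a₁ + a₂) ∧
      (∀ x : ℝ, 0 < x → rX x = -(x • a₁) + a₃) := by
  have pexider (x y : ℝ) (hx : 0 < x) (hy : 0 < y) :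
      rV (-(x + y)) = rX x + (rY y - rU (-y)) := by
    rw [neg_add', ← add_sub_assoc, ← heq x y hx hy, add_sub_cancel_left]
  have hg : ContinuousAt (fun z ↦ rV (-z)) (-v₀) :=
    ContinuousAt.comp (by rwa [neg_neg]) continuousAt_neg
  obtain ⟨a, b, c, rX_eq, -, rV_eq⟩ :=
    exists_affine_of_pexider (g := fun z ↦ rV (-z)) (h := fun y ↦ rY y - rU (-y))
      pexider (neg_pos.mpr hv₀) hg
  refine ⟨-a, b + c, b, fun v hv ↦ ?_, fun x hx ↦ ?_⟩
  · simpa only [neg_neg, neg_smul, smul_neg] using rV_eq (-v) (neg_pos.mpr hv)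
  · simpa only [smul_neg, neg_neg] using rX_eq x hx

end Real

theorem al_region1_functional_equation
    (rU rV rX rY : ℝ → ℝ)
    (hU : ∀ t ∈ Iio (0 : ℝ), DifferentiableAt ℝ rU t ∧ DifferentiableAt ℝ (deriv rU) t)
    (hV : ∀ t ∈ Iio (0 : ℝ), DifferentiableAt ℝ rV t ∧ DifferentiableAt ℝ (deriv rV) t)
    (hX : ∀ t ∈ Ioi (0 : ℝ), DifferentiableAt ℝ rX t ∧ DifferentiableAt ℝ (deriv rX) t)
    (hY : ∀ t ∈ Ioi (0 : ℝ), DifferentiableAt ℝ rY t ∧ DifferentiableAt ℝ (deriv rY) t)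
    (heq : ∀ x y : ℝ, 0 < x → 0 < y → rU (-y) + rV (-x - y) = rX x + rY y) :
    ∃ a₁ a₂ a₃ : ℝ,
      (∀ v : ℝ, v < 0 → rV v = a₁ * v + a₂) ∧
      (∀ x : ℝ, 0 < x → rX x = -a₁ * x + a₃) := by
  have hV₁ : (-1 : ℝ) < 0 := neg_one_lt_zero
  simpa only [smul_eq_mul, mul_comm, neg_mul, mul_neg] using
    al_region1_functional_equation_general hV₁ (hV (-1) hV₁).1.continuousAt heq
end

section
/- Let r_U, r_V, r_X, r_Y be real-valued functions with r_U, r_V, r_X twice-differentiable on (−∞,0) and r_Y twice-differentiable on (0,∞), satisfying r_U(x−y) + r_V(−y) = r_X(x) + r_Y(y) for all x < 0 and y > 0. Then there exist real constants a₄, a₅, a₆ such that r_U(u) = a₄u + a₅ for all u < 0 and r_X(x) = a₄x + a₆ for all x < 0. -/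
open Set

/-!
For fixed `y`, the equation says that `rX` and the translate of `rU` by `y` differ by a constant, so
the slope of `rU` at `u < 0` is the slope of `rX` at every `x` in `(u, 0)`. A slope of `rU` at a
single point `u₀` thus passes to `rX` on `(u₀, 0)`, from there to `rU` on the whole half-line, and
then back to `rX` everywhere; a function with constant slope on an interval is affine.
-/

open Filter Topology

theorem hasDerivAt_sub_iff_of_eventually_eq_add_const {𝕜 F : Type*} [NontriviallyNormedField 𝕜]
    [NormedAddCommGroup F] [NormedSpace 𝕜 F] {f g : 𝕜 → F} {a c : F} {x y : 𝕜}
    (h : ∀ᶠ z in 𝓝 x, f (z - y) = g z + c) :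
    HasDerivAt f a (x - y) ↔ HasDerivAt g a x := by
  have translate_iff : HasDerivAt (fun z ↦ f (z - y)) a x ↔ HasDerivAt g a x := by
    rw [EventuallyEq.hasDerivAt_iff h, hasDerivAt_add_const_iff]
  rw [← translate_iff]
  refine ⟨fun hf ↦ hf.comp_sub_const x y, fun hf ↦ ?_⟩
  rw [← sub_add_cancel x y] at hf
  simpa only [add_sub_cancel_right] using hf.comp_add_const (x - y) y

theorem exists_eqOn_smul_add_of_hasDerivAt {𝕜 F : Type*} [RCLike 𝕜] [NormedAddCommGroup F]
    [NormedSpace 𝕜 F] {s : Set 𝕜} (hs : IsOpen s) (hs' : IsPreconnected s) {f : 𝕜 → F} {a : F}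
    (hf : ∀ t ∈ s, HasDerivAt f a t) :
    ∃ b, s.EqOn f (fun t ↦ t • a + b) := by
  have hlin (t : 𝕜) : HasDerivAt (fun t : 𝕜 ↦ t • a) a t := by
    simpa only [one_smul] using (hasDerivAt_id' t).smul_const a
  exact hs.exists_eq_add_of_deriv_eq hs'
    (fun t ht ↦ (hf t ht).differentiableAt.differentiableWithinAt)
    (fun t _ ↦ (hlin t).differentiableAt.differentiableWithinAt)
    fun t ht ↦ (hf t ht).deriv.trans (hlin t).deriv.symm

section HalfLine

variable {F : Type*} [NormedAddCommGroup F] [NormedSpace ℝ F] {f g h : ℝ → F} {a : F}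

theorem hasDerivAt_iff_hasDerivAt_of_map_sub_eq_add
    (hfgh : ∀ x y : ℝ, x < 0 → 0 < y → f (x - y) = g x + h y) {u x : ℝ} (hux : u < x)
    (hx : x < 0) :
    HasDerivAt f a u ↔ HasDerivAt g a x := by
  have hev : ∀ᶠ z in 𝓝 x, f (z - (x - u)) = g z + h (x - u) := by
    filter_upwards [Iio_mem_nhds hx] with z hz using hfgh z (x - u) hz (sub_pos.mpr hux)
  simpa only [sub_sub_cancel] using hasDerivAt_sub_iff_of_eventually_eq_add_const hev

theorem hasDerivAt_left_of_map_sub_eq_add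
    (hfgh : ∀ x y : ℝ, x < 0 → 0 < y → f (x - y) = g x + h y) {u₀ : ℝ} (hu₀ : u₀ < 0)
    (hf : HasDerivAt f a u₀) {u : ℝ} (hu : u < 0) :
    HasDerivAt f a u := by
  obtain ⟨x, hx, hx0⟩ := exists_between (max_lt hu₀ hu)
  have hg : HasDerivAt g a x :=
    (hasDerivAt_iff_hasDerivAt_of_map_sub_eq_add hfgh ((le_max_left u₀ u).trans_lt hx) hx0).mp hf
  exact (hasDerivAt_iff_hasDerivAt_of_map_sub_eq_add hfgh ((le_max_right u₀ u).trans_lt hx) hx0).mpr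
    hg

theorem hasDerivAt_right_of_map_sub_eq_add
    (hfgh : ∀ x y : ℝ, x < 0 → 0 < y → f (x - y) = g x + h y) {u₀ : ℝ} (hu₀ : u₀ < 0)
    (hf : HasDerivAt f a u₀) {x : ℝ} (hx : x < 0) :
    HasDerivAt g a x := by
  obtain ⟨u, hux⟩ := exists_lt x
  exact (hasDerivAt_iff_hasDerivAt_of_map_sub_eq_add hfgh hux hx).mp
    (hasDerivAt_left_of_map_sub_eq_add hfgh hu₀ hf (hux.trans hx))

end HalfLine

theorem al_region2_functional_equation_general {F : Type*} [NormedAddCommGroup F]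
    [NormedSpace ℝ F] (rU rV rX rY : ℝ → F) {a : F} {u₀ : ℝ} (hu₀ : u₀ < 0)
    (hU : HasDerivAt rU a u₀)
    (heq : ∀ x y : ℝ, x < 0 → 0 < y → rU (x - y) + rV (-y) = rX x + rY y) :
    ∃ a₅ a₆ : F,
      (∀ u : ℝ, u < 0 → rU u = u • a + a₅) ∧
      (∀ x : ℝ, x < 0 → rX x = x • a + a₆) := by
  have hsub (x y : ℝ) (hx : x < 0) (hy : 0 < y) : rU (x - y) = rX x + (rY y - rV (-y)) := by
    rw [← add_sub_assoc, ← heq x y hx hy, add_sub_cancel_right]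
  obtain ⟨a₅, hU_affine⟩ := exists_eqOn_smul_add_of_hasDerivAt isOpen_Iio isPreconnected_Iio
    fun _ hu ↦ hasDerivAt_left_of_map_sub_eq_add (h := fun y ↦ rY y - rV (-y)) hsub hu₀ hU hu
  obtain ⟨a₆, hX_affine⟩ := exists_eqOn_smul_add_of_hasDerivAt isOpen_Iio isPreconnected_Iio
    fun _ hx ↦ hasDerivAt_right_of_map_sub_eq_add (h := fun y ↦ rY y - rV (-y)) hsub hu₀ hU hx
  exact ⟨a₅, a₆, fun _ hu ↦ hU_affine hu, fun _ hx ↦ hX_affine hx⟩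

theorem al_region2_functional_equation
    (rU rV rX rY : ℝ → ℝ)
    (hU : ∀ t ∈ Iio (0 : ℝ), DifferentiableAt ℝ rU t ∧ DifferentiableAt ℝ (deriv rU) t)
    (hV : ∀ t ∈ Iio (0 : ℝ), DifferentiableAt ℝ rV t ∧ DifferentiableAt ℝ (deriv rV) t)
    (hX : ∀ t ∈ Iio (0 : ℝ), DifferentiableAt ℝ rX t ∧ DifferentiableAt ℝ (deriv rX) t)
    (hY : ∀ t ∈ Ioi (0 : ℝ), DifferentiableAt ℝ rY t ∧ DifferentiableAt ℝ (deriv rY) t)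
    (heq : ∀ x y : ℝ, x < 0 → 0 < y → rU (x - y) + rV (-y) = rX x + rY y) :
    ∃ a₄ a₅ a₆ : ℝ,
      (∀ u : ℝ, u < 0 → rU u = a₄ * u + a₅) ∧
      (∀ x : ℝ, x < 0 → rX x = a₄ * x + a₆) := by
  have hU_deriv : HasDerivAt rU (deriv rU (-1)) (-1) :=
    (hU (-1) (mem_Iio.mpr neg_one_lt_zero)).1.hasDerivAt
  exact ⟨_, by simpa only [smul_eq_mul, mul_comm] using
    al_region2_functional_equation_general rU rV rX rY neg_one_lt_zero hU_deriv heq⟩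
end

section
/- Let r_U be twice-differentiable on (0,∞), let r_V, r_X, r_Y be twice-differentiable on (−∞,0), and suppose r_U(x−y) + r_V(−x) = r_X(x) + r_Y(y) for all y < x < 0. Then there exist real constants a₇, a₈, a₉ such that r_U(u) = −a₇u + a₈ for all u > 0 and r_Y(y) = a₇y + a₉ for all y < 0. -/
open Set

/-!
At `y = x - u` the equation reads `rU u = g x + rY (x - u)` with `g x = rX x - rV (-x)`, for `u > 0`
and `x < 0`. Differences in `u` eliminate `g`, and comparing two choices of `x` shows that
`rU a - rU b` depends only on `a - b`. It is therefore an additive function of `a - b`, which is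
linear as soon as `rU` is continuous at one point.
-/

section Additive

variable {G E : Type*} [AddCommGroup G] [LinearOrder G] [AddCommGroup E]

/-- The Pexider equation `f (x - y) = g x + h y` restricted to the sector `y < x < 0`, so that only
the values of `f` on the positive and of `g`, `h` on the negative half-line are constrained. -/
def PexiderOnSector (f g h : G → E) : Prop :=
  ∀ x y, y < x → x < 0 → f (x - y) = g x + h y

variable [IsOrderedAddMonoid G] {f g h : G → E}

lemma PexiderOnSector.sub_eq_sub (hfgh : PexiderOnSector f g h) {x u v : G}
    (hx : x < 0) (hu : 0 < u) (hv : 0 < v) : f u - f v = h (x - u) - h (x - v) := by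
  have hfu := hfgh x (x - u) (sub_lt_self x hu) hx
  have hfv := hfgh x (x - v) (sub_lt_self x hv) hx
  rw [sub_sub_cancel] at hfu hfv
  rw [hfu, hfv, add_sub_add_left_eq_sub]

lemma PexiderOnSector.sub_eq_sub_of_sub_eq_sub (hfgh : PexiderOnSector f g h) {a b c d : G}
    (ha : 0 < a) (hb : 0 < b) (hc : 0 < c) (hd : 0 < d) (hsub : a - b = c - d) :
    f a - f b = f c - f d := by
  have hac : -d - a = -b - c := by
    rw [← neg_add', ← neg_add', add_comm d, add_comm b, sub_eq_sub_iff_add_eq_add.1 hsub]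
  calc f a - f b = h (-d - a) - h (-d - b) := hfgh.sub_eq_sub (neg_lt_zero.2 hd) ha hb
    _ = h (-b - c) - h (-b - d) := by rw [hac, neg_sub_comm d b]
    _ = f c - f d := (hfgh.sub_eq_sub (neg_lt_zero.2 hb) hc hd).symm

lemma exists_addMonoidHom_of_sub_eq_sub_s16 [Nontrivial G]
    (hf : ∀ ⦃a b c d : G⦄, 0 < a → 0 < b → 0 < c → 0 < d → a - b = c - d → f a - f b = f c - f d) :
    ∃ A : G →+ E, ∀ a b, 0 < a → 0 < b → f a - f b = A (a - b) := by
  obtain ⟨e, he⟩ := exists_zero_lt (α := G)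
  -- For every `s`, the points `e + s⁺` and `e + s⁻` are positive and differ by `s`.
  let A : G → E := fun s ↦ f (e + s⁺) - f (e + s⁻)
  have sub_eq_A {a b s : G} (ha : 0 < a) (hb : 0 < b) (hs : a - b = s) : f a - f b = A s :=
    hf ha hb (by positivity) (by positivity) (by
      rw [add_sub_add_left_eq_sub, posPart_sub_negPart, hs])
  have A_add (s t : G) : A (s + t) = A s + A t := by
    have hs : A s = f (e + s⁺ + t⁺) - f (e + s⁻ + t⁺) :=
      (sub_eq_A (by positivity) (by positivity) (by
        rw [add_sub_add_right_eq_sub, add_sub_add_left_eq_sub, posPart_sub_negPart])).symm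
    have ht : A t = f (e + s⁻ + t⁺) - f (e + s⁻ + t⁻) :=
      (sub_eq_A (by positivity) (by positivity) (by
        rw [add_sub_add_left_eq_sub, posPart_sub_negPart])).symm
    rw [hs, ht, sub_add_sub_cancel]
    refine (sub_eq_A (by positivity) (by positivity) ?_).symm
    rw [add_sub_add_comm, add_sub_add_left_eq_sub, posPart_sub_negPart, posPart_sub_negPart]
  exact ⟨AddMonoidHom.mk' A A_add, fun a b ha hb ↦ sub_eq_A ha hb rfl⟩

theorem PexiderOnSector.exists_addMonoidHom [Nontrivial G] [DenselyOrdered G]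
    (hfgh : PexiderOnSector f g h) :
    ∃ A : G →+ E, (∀ u v, 0 < u → 0 < v → f u - f v = A (u - v)) ∧
      ∀ y z, y < 0 → z < 0 → h y - h z = A (z - y) := by
  obtain ⟨A, hfA⟩ := exists_addMonoidHom_of_sub_eq_sub_s16 fun _ _ _ _ ↦
    hfgh.sub_eq_sub_of_sub_eq_sub
  refine ⟨A, hfA, fun y z hy hz ↦ ?_⟩
  obtain ⟨x, hyzx, hx⟩ := exists_between (max_lt hy hz)
  have hxy : 0 < x - y := sub_pos.2 ((le_max_left y z).trans_lt hyzx)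
  have hxz : 0 < x - z := sub_pos.2 ((le_max_right y z).trans_lt hyzx)
  have hdiff := hfgh.sub_eq_sub hx hxy hxz
  rw [sub_sub_cancel, sub_sub_cancel] at hdiff
  rw [← hdiff, hfA _ _ hxy hxz, sub_sub_sub_cancel_left]

lemma continuous_of_sub_eq_map_sub [TopologicalSpace G] [IsTopologicalAddGroup G]
    [OrderClosedTopology G] [TopologicalSpace E] [IsTopologicalAddGroup E] {A : G →+ E}
    (hfA : ∀ u v, 0 < u → 0 < v → f u - f v = A (u - v)) {c : G} (hc : 0 < c)
    (hcont : ContinuousAt f c) : Continuous A := by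
  refine continuous_of_continuousAt_zero A ?_
  have hshift : ContinuousAt (fun s ↦ f (c + s) - f c) 0 :=
    (ContinuousAt.comp' (by rwa [add_zero]) (by fun_prop)).sub continuousAt_const
  refine hshift.congr ?_
  filter_upwards [Ioi_mem_nhds (neg_lt_zero.2 hc)] with s hs
  rw [hfA _ _ (neg_lt_iff_pos_add'.1 hs) hc, add_sub_cancel_left]

end Additive

theorem al_region4_functional_equation_general {E : Type*} [AddCommGroup E] [Module ℝ E]
    [TopologicalSpace E] [IsTopologicalAddGroup E] [ContinuousSMul ℝ E] [T2Space E]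
    {rU rV rX rY : ℝ → E} {c : ℝ} (hc : 0 < c) (hU : ContinuousAt rU c)
    (heq : ∀ x y : ℝ, y < x → x < 0 → rU (x - y) + rV (-x) = rX x + rY y) :
    ∃ a₇ a₈ a₉ : E,
      (∀ u : ℝ, 0 < u → rU u = u • (-a₇) + a₈) ∧
      (∀ y : ℝ, y < 0 → rY y = y • a₇ + a₉) := by
  have hpex : PexiderOnSector rU (fun x ↦ rX x - rV (-x)) rY := fun x y hyx hx ↦ by
    rw [sub_add_eq_add_sub, ← heq x y hyx hx, add_sub_cancel_right]
  obtain ⟨A, hUA, hYA⟩ := hpex.exists_addMonoidHom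
  have hA (s : ℝ) : A s = s • A 1 := by
    simpa only [smul_eq_mul, mul_one] using
      map_real_smul A (continuous_of_sub_eq_map_sub hUA hc hU) s 1
  refine ⟨-A 1, rU 1 - A 1, rY (-1) - A 1, fun u hu ↦ ?_, fun y hy ↦ ?_⟩
  · rw [← sub_add_cancel (rU u) (rU 1), hUA u 1 hu one_pos, hA]
    module
  · rw [← sub_add_cancel (rY y) (rY (-1)), hYA y (-1) hy neg_one_lt_zero, hA]
    module

theorem al_region4_functional_equation
    (rU rV rX rY : ℝ → ℝ)
    (hU : ∀ t ∈ Ioi (0 : ℝ), DifferentiableAt ℝ rU t ∧ DifferentiableAt ℝ (deriv rU) t)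
    (hV : ∀ t ∈ Iio (0 : ℝ), DifferentiableAt ℝ rV t ∧ DifferentiableAt ℝ (deriv rV) t)
    (hX : ∀ t ∈ Iio (0 : ℝ), DifferentiableAt ℝ rX t ∧ DifferentiableAt ℝ (deriv rX) t)
    (hY : ∀ t ∈ Iio (0 : ℝ), DifferentiableAt ℝ rY t ∧ DifferentiableAt ℝ (deriv rY) t)
    (heq : ∀ x y : ℝ, y < x → x < 0 → rU (x - y) + rV (-x) = rX x + rY y) :
    ∃ a₇ a₈ a₉ : ℝ,
      (∀ u : ℝ, 0 < u → rU u = -a₇ * u + a₈) ∧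
      (∀ y : ℝ, y < 0 → rY y = a₇ * y + a₉) := by
  simpa only [smul_eq_mul, mul_comm] using
    al_region4_functional_equation_general one_pos (hU 1 (mem_Ioi.2 one_pos)).1.continuousAt heq
end

section
/- Let c₁, c₂ > 0. Let r_U, r_V, r_X, r_Y be real-valued functions with r_V twice-differentiable on (−c₁,∞), r_Y twice-differentiable on (−c₂,∞), r_U twice-differentiable on (−c₂,c₁), and r_X twice-differentiable on (−c₁,c₂), and suppose r_U(−x) + r_V(y+2x) = r_X(x) + r_Y(y) for all (x,y) ∈ (−c₁,c₂) × (−c₂,∞) with x > −y. Then there exist real constants a₁, a₂, a₃ such that r_V(v) = a₁v + a₂ for all v ∈ (−c₁,∞) and r_Y(y) = a₁y + a₃ for all y ∈ (−c₂,∞). -/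
open Set

/-!
In the coordinates `s = 2 x` and `y`, with `g s = rX (s / 2) - rU (-(s / 2))`, the equation is
Pexider's equation `rV (s + y) = g s + rY y` on a convex open region of the plane. The derivative
`rV' (s + y)` equals `g' s` and `rY' y`, so it depends neither on `y` nor on `s`; by connectedness
it is constant.
-/

open Topology

theorem exists_eqOn_clm_add_const_of_hasFDerivAt {𝕜 E F : Type*}
    [NontriviallyNormedField 𝕜] [IsRCLikeNormedField 𝕜]
    [NormedAddCommGroup E] [NormedSpace 𝕜 E] [NormedAddCommGroup F] [NormedSpace 𝕜 F]
    {s : Set E} (hs : IsOpen s) (hs' : IsPreconnected s)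
    {f : E → F} {A : E →L[𝕜] F} (hf : ∀ x ∈ s, HasFDerivAt f A x) :
    ∃ b, EqOn f (fun x ↦ A x + b) s := by
  let : RCLike 𝕜 := IsRCLikeNormedField.rclike 𝕜
  let : NormedSpace ℝ E := .restrictScalars ℝ 𝕜 E
  exact hs.exists_eq_add_of_fderiv_eq hs'
    (fun x hx ↦ (hf x hx).differentiableAt.differentiableWithinAt)
    A.differentiable.differentiableOn
    fun x hx ↦ (hf x hx).fderiv.trans A.fderiv.symm

section Pexider

variable {E F : Type*}

/-- Pexider's functional equation `f (x + y) = g x + h y`, restricted to a set `Ω` of pairs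
`(x, y)`. -/
def PexiderOn [Add E] [Add F] (f g h : E → F) (Ω : Set (E × E)) : Prop :=
  ∀ p ∈ Ω, f (p.1 + p.2) = g p.1 + h p.2

namespace PexiderOn

variable {f g h : E → F} {Ω : Set (E × E)}

theorem swap [AddCommMagma E] [AddCommMagma F] (H : PexiderOn f g h Ω) :
    PexiderOn f h g (Prod.swap ⁻¹' Ω) := fun p hp ↦ by
  simpa only [Prod.fst_swap, Prod.snd_swap, add_comm] using H p.swap hp

variable {𝕜 : Type*} [NontriviallyNormedField 𝕜] [NormedAddCommGroup E] [NormedSpace 𝕜 E]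
  [NormedAddCommGroup F] [NormedSpace 𝕜 F]

theorem hasFDerivAt_right (H : PexiderOn f g h Ω) {p : E × E} (hp : Ω ∈ 𝓝 p)
    {A : E →L[𝕜] F} (hf : HasFDerivAt f A (p.1 + p.2)) : HasFDerivAt h A p.2 := by
  have hshift : HasFDerivAt (fun y ↦ f (p.1 + y) - g p.1) A p.2 :=
    ((hasFDerivAt_comp_add_left p.1).2 hf).sub_const (g p.1)
  have hslice : ∀ᶠ y in 𝓝 p.2, (p.1, y) ∈ Ω := (Continuous.prodMk_right p.1).continuousAt hp
  refine hshift.congr_of_eventuallyEq (hslice.mono fun y hy ↦ ?_)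
  exact (sub_eq_of_eq_add' (H _ hy)).symm

theorem hasFDerivAt_left (H : PexiderOn f g h Ω) {p : E × E} (hp : Ω ∈ 𝓝 p)
    {A : E →L[𝕜] F} (hf : HasFDerivAt f A (p.1 + p.2)) : HasFDerivAt g A p.1 :=
  H.swap.hasFDerivAt_right (p := p.swap) (continuous_swap.continuousAt hp) (add_comm p.1 p.2 ▸ hf)

theorem eventually_fderiv_add_eq (H : PexiderOn f g h Ω) (hΩ : IsOpen Ω)
    (hf : ∀ p ∈ Ω, DifferentiableAt 𝕜 f (p.1 + p.2)) {p : E × E} (hp : p ∈ Ω) :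
    ∀ᶠ q in 𝓝 p, fderiv 𝕜 f (p.1 + p.2) = fderiv 𝕜 f (q.1 + q.2) := by
  have hcorner : ∀ᶠ q : E × E in 𝓝 p, (p.1, q.2) ∈ Ω :=
    (continuous_const.prodMk continuous_snd).continuousAt (hΩ.mem_nhds hp)
  filter_upwards [hΩ.mem_nhds hp, hcorner] with q hq hpq
  calc fderiv 𝕜 f (p.1 + p.2)
      = fderiv 𝕜 f (p.1 + q.2) :=
        (H.hasFDerivAt_left (hΩ.mem_nhds hp) (hf p hp).hasFDerivAt).unique
          (H.hasFDerivAt_left (hΩ.mem_nhds hpq) (hf _ hpq).hasFDerivAt)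
    _ = fderiv 𝕜 f (q.1 + q.2) :=
        (H.hasFDerivAt_right (hΩ.mem_nhds hpq) (hf _ hpq).hasFDerivAt).unique
          (H.hasFDerivAt_right (hΩ.mem_nhds hq) (hf q hq).hasFDerivAt)

theorem exists_hasFDerivAt (H : PexiderOn f g h Ω) (hΩ : IsOpen Ω) (hΩ' : IsPreconnected Ω)
    (hf : ∀ p ∈ Ω, DifferentiableAt 𝕜 f (p.1 + p.2)) :
    ∃ A : E →L[𝕜] F, ∀ p ∈ Ω, HasFDerivAt f A (p.1 + p.2) := by
  obtain rfl | ⟨p, hp⟩ := Ω.eq_empty_or_nonempty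
  · exact ⟨0, fun _ ↦ False.elim⟩
  · refine ⟨fderiv 𝕜 f (p.1 + p.2), fun q hq ↦ ?_⟩
    have hconst : fderiv 𝕜 f (p.1 + p.2) = fderiv 𝕜 f (q.1 + q.2) :=
      hΩ'.induction₂ (fun p q ↦ fderiv 𝕜 f (p.1 + p.2) = fderiv 𝕜 f (q.1 + q.2))
        (fun _ hp ↦ (H.eventually_fderiv_add_eq hΩ hf hp).filter_mono nhdsWithin_le_nhds)
        (fun _ _ _ _ _ _ ↦ Eq.trans) (fun _ _ _ _ ↦ Eq.symm) hp hq
    exact hconst ▸ (hf q hq).hasFDerivAt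

theorem exists_affine [IsRCLikeNormedField 𝕜] (H : PexiderOn f g h Ω) (hΩ : IsOpen Ω)
    (hΩ' : IsPreconnected Ω) (hf : ∀ p ∈ Ω, DifferentiableAt 𝕜 f (p.1 + p.2)) :
    ∃ (A : E →L[𝕜] F) (b c : F), ∀ p ∈ Ω,
      f (p.1 + p.2) = A (p.1 + p.2) + (b + c) ∧ g p.1 = A p.1 + b ∧ h p.2 = A p.2 + c := by
  obtain ⟨A, hA⟩ := H.exists_hasFDerivAt hΩ hΩ' hf
  obtain ⟨b, hb⟩ : ∃ b, EqOn g (fun x ↦ A x + b) (Prod.fst '' Ω) :=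
    exists_eqOn_clm_add_const_of_hasFDerivAt (isOpenMap_fst Ω hΩ)
      (hΩ'.image _ continuous_fst.continuousOn) <|
      forall_mem_image.2 fun p hp ↦ H.hasFDerivAt_left (hΩ.mem_nhds hp) (hA p hp)
  obtain ⟨c, hc⟩ : ∃ c, EqOn h (fun y ↦ A y + c) (Prod.snd '' Ω) :=
    exists_eqOn_clm_add_const_of_hasFDerivAt (isOpenMap_snd Ω hΩ)
      (hΩ'.image _ continuous_snd.continuousOn) <|
      forall_mem_image.2 fun p hp ↦ H.hasFDerivAt_right (hΩ.mem_nhds hp) (hA p hp)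
  refine ⟨A, b, c, fun p hp ↦ ?_⟩
  have hg : g p.1 = A p.1 + b := hb (mem_image_of_mem _ hp)
  have hh : h p.2 = A p.2 + c := hc (mem_image_of_mem _ hp)
  exact ⟨by rw [H p hp, hg, hh, map_add, add_add_add_comm], hg, hh⟩

end PexiderOn

end Pexider

/-- The region `x > -y` of `(-c₁, c₂) × (-c₂, ∞)`, in the coordinates `(2 x, y)`. Doubling `x`
makes the argument `y + 2 x` of the functional equation the sum of the two coordinates. -/
def region1 (c₁ c₂ : ℝ) : Set (ℝ × ℝ) :=
  Ioo (-(2 * c₁)) (2 * c₂) ×ˢ Ioi (-c₂) ∩ {p | 0 < p.1 + 2 * p.2}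

section Region1

variable {c₁ c₂ : ℝ}

theorem mk_mem_region1 {x y : ℝ} :
    (2 * x, y) ∈ region1 c₁ c₂ ↔ x ∈ Ioo (-c₁) c₂ ∧ y ∈ Ioi (-c₂) ∧ -y < x := by
  simp only [region1, mem_inter_iff, mem_prod, mem_Ioo, mem_Ioi, mem_ofPred_eq]
  grind

theorem isOpen_region1 : IsOpen (region1 c₁ c₂) :=
  (isOpen_Ioo.prod isOpen_Ioi).inter (isOpen_lt (by fun_prop) (by fun_prop))

theorem convex_region1 : Convex ℝ (region1 c₁ c₂) :=
  ((convex_Ioo _ _).prod (convex_Ioi _)).inter <|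
    (convex_Ioi (0 : ℝ)).linear_preimage (LinearMap.fst ℝ ℝ ℝ + (2 : ℝ) • LinearMap.snd ℝ ℝ ℝ)

theorem image_add_region1 (hc : 0 < c₁ + c₂) :
    (fun p : ℝ × ℝ ↦ p.1 + p.2) '' region1 c₁ c₂ = Ioi (-c₁) := by
  ext v
  constructor
  · rintro ⟨⟨s, y⟩, ⟨⟨⟨hs, -⟩, -⟩, hsy⟩, rfl⟩
    rw [mem_ofPred_eq] at hsy
    rw [mem_Ioi]
    linarith
  · intro hv
    rw [mem_Ioi] at hv
    obtain ⟨x, hx, hx'⟩ : ∃ x, -c₁ < x ∧ x < min c₂ (min v ((v + c₂) / 2)) :=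
      exists_between (lt_min (by linarith) (lt_min hv (by linarith)))
    obtain ⟨hxc, hxv, hxvc⟩ : x < c₂ ∧ x < v ∧ x < (v + c₂) / 2 := by
      simpa only [lt_min_iff] using hx'
    refine ⟨(2 * x, v - 2 * x), mk_mem_region1.2 ⟨⟨hx, hxc⟩, ?_, ?_⟩, add_sub_cancel _ _⟩
    · rw [mem_Ioi]
      linarith [hxvc]
    · linarith

theorem image_snd_region1 (hc : 0 < c₁ + c₂) : Prod.snd '' region1 c₁ c₂ = Ioi (-c₂) := by
  refine Subset.antisymm (image_subset_iff.2 fun p hp ↦ hp.1.2) fun y hy ↦ ?_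
  obtain ⟨x, hx, hxc⟩ : ∃ x, max (-c₁) (-y) < x ∧ x < c₂ :=
    exists_between (max_lt (by linarith) (neg_lt.1 hy))
  obtain ⟨hcx, hyx⟩ := max_lt_iff.1 hx
  exact ⟨(2 * x, y), mk_mem_region1.2 ⟨⟨hcx, hxc⟩, hy, hyx⟩, rfl⟩

theorem pexiderOn_region1 {F : Type*} [AddCommGroup F] {rU rV rX rY : ℝ → F}
    (heq : ∀ x y : ℝ, x ∈ Ioo (-c₁) c₂ → y ∈ Ioi (-c₂) → -y < x →
      rU (-x) + rV (y + 2 * x) = rX x + rY y) :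
    PexiderOn rV (fun s ↦ rX (s / 2) - rU (-(s / 2))) rY (region1 c₁ c₂) := by
  rintro ⟨s, y⟩ hp
  obtain ⟨x, rfl⟩ : ∃ x, s = 2 * x := ⟨s / 2, by ring⟩
  obtain ⟨hx, hy, hyx⟩ := mk_mem_region1.1 hp
  calc rV (2 * x + y)
      = rX x - rU (-x) + rY y := by
        rw [sub_add_eq_add_sub, ← heq x y hx hy hyx, add_sub_cancel_left, add_comm]
    _ = rX (2 * x / 2) - rU (-(2 * x / 2)) + rY y := by
        rw [mul_div_cancel_left₀ x two_ne_zero]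

end Region1

theorem sExp_region1_functional_equation_general
    {F : Type*} [NormedAddCommGroup F] [NormedSpace ℝ F] {c₁ c₂ : ℝ} (hc : 0 < c₁ + c₂)
    {rU rV rX rY : ℝ → F} (hV : ∀ t ∈ Ioi (-c₁), DifferentiableAt ℝ rV t)
    (heq : ∀ x y : ℝ, x ∈ Ioo (-c₁) c₂ → y ∈ Ioi (-c₂) → -y < x →
      rU (-x) + rV (y + 2 * x) = rX x + rY y) :
    ∃ a₁ a₂ a₃ : F,
      (∀ v ∈ Ioi (-c₁), rV v = v • a₁ + a₂) ∧
      (∀ y ∈ Ioi (-c₂), rY y = y • a₁ + a₃) := by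
  rw [← image_add_region1 hc, forall_mem_image] at hV
  rw [← image_add_region1 hc, ← image_snd_region1 hc]
  simp only [forall_mem_image]
  obtain ⟨A, b, c, hA⟩ := (pexiderOn_region1 heq).exists_affine (𝕜 := ℝ) isOpen_region1
    convex_region1.isPreconnected fun _ hp ↦ hV hp
  have hA_smul (t : ℝ) : t • A 1 = A t := by rw [← map_smul, smul_eq_mul, mul_one]
  exact ⟨A 1, b + c, c, fun p hp ↦ by rw [hA_smul, (hA p hp).1],
    fun p hp ↦ by rw [hA_smul, (hA p hp).2.2]⟩

theorem sExp_region1_functional_equation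
    (c₁ c₂ : ℝ) (hc₁ : 0 < c₁) (hc₂ : 0 < c₂)
    (rU rV rX rY : ℝ → ℝ)
    (hV : ∀ t ∈ Ioi (-c₁), DifferentiableAt ℝ rV t ∧ DifferentiableAt ℝ (deriv rV) t)
    (hY : ∀ t ∈ Ioi (-c₂), DifferentiableAt ℝ rY t ∧ DifferentiableAt ℝ (deriv rY) t)
    (hU : ∀ t ∈ Ioo (-c₂) c₁, DifferentiableAt ℝ rU t ∧ DifferentiableAt ℝ (deriv rU) t)
    (hX : ∀ t ∈ Ioo (-c₁) c₂, DifferentiableAt ℝ rX t ∧ DifferentiableAt ℝ (deriv rX) t)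
    (heq : ∀ x y : ℝ, x ∈ Ioo (-c₁) c₂ → y ∈ Ioi (-c₂) → -y < x →
      rU (-x) + rV (y + 2 * x) = rX x + rY y) :
    ∃ a₁ a₂ a₃ : ℝ,
      (∀ v ∈ Ioi (-c₁), rV v = a₁ * v + a₂) ∧
      (∀ y ∈ Ioi (-c₂), rY y = a₁ * y + a₃) := by
  simpa only [smul_eq_mul, mul_comm] using
    sExp_region1_functional_equation_general (add_pos hc₁ hc₂) (fun t ht ↦ (hV t ht).1) heq
end

section
/- Let α, β ≥ 0 with α ≠ β, and let r_U, r_V : (0,∞) → ℝ be twice-differentiable functions satisfying, for all u, v > 0, (1 + 2βuv + αβu²v²)·u²·r_U''(u) + (1 + βuv)·2u·r_U'(u) = (1 + 2αuv + αβu²v²)·v²·r_V''(v) + (1 + αuv)·2v·r_V'(v). Then there exist real constants λ, c₁, c₂, b₂, b₃ such that r_U(u) = (λ−1)·ln u − c₂αu − c₁/u + b₂ for all u > 0 and r_V(v) = (λ−1)·ln v − c₁βv − c₂/v + b₃ for all v > 0. -/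
open Set

/-!
Put `p u = u² rU'(u)` and `q v = v² rV'(v)`. The equation then says that the Wronskian in `u` of
`1 + 2βuv + αβu²v²` and `p` equals the Wronskian in `v` of `1 + 2αuv + αβu²v²` and `q`. The left
side is quadratic in `v` with constant term `p'(u)`, and the right side is quadratic in `u`; so `p'`
is a quadratic polynomial, and likewise `q'`. Hence `p` and `q` are cubic polynomials on `(0, ∞)`,
and letting `v → 0` gives `p'(u) = q'(0) - 2αq(0)u`, while `u → 0` gives `q'(v) = p'(0) - 2βp(0)v`.
It remains to integrate twice.
-/

section

open Filter Topology

lemma exists_quadratic_of_separated_quadratics {R : Type*} [CommRing R] [PartialOrder R]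
    [IsStrictOrderedRing R] {f₀ f₁ f₂ g₀ g₁ g₂ : R → R}
    (h : ∀ u v, 0 < u → 0 < v →
      f₀ u + f₁ u * v + f₂ u * v ^ 2 = g₀ v + g₁ v * u + g₂ v * u ^ 2) :
    ∃ a b c : R, ∀ u, 0 < u → f₀ u = a + b * u + c * u ^ 2 := by
  -- A quadratic `f` satisfies `f 0 = 3 f 1 - 3 f 2 + f 3`.
  let extrapolate (g : R → R) : R := 3 * g 1 - 3 * g 2 + g 3
  refine ⟨extrapolate g₀, extrapolate g₁, extrapolate g₂, fun u hu => ?_⟩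
  linear_combination 3 * h u 1 hu one_pos - 3 * h u 2 hu two_pos + h u 3 hu three_pos

lemma exists_eq_cubic_of_deriv_eq_quadratic {f : ℝ → ℝ} {s : Set ℝ} {a b c : ℝ}
    (hs : IsOpen s) (hs' : IsPreconnected s) (hf : DifferentiableOn ℝ f s)
    (hf' : ∀ t ∈ s, deriv f t = a + b * t + c * t ^ 2) :
    ∃ d, ∀ t ∈ s, f t = d + a * t + b / 2 * t ^ 2 + c / 3 * t ^ 3 := by
  have hcubic (t : ℝ) : HasDerivAt (fun x => a * x + b / 2 * x ^ 2 + c / 3 * x ^ 3)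
      (a + b * t + c * t ^ 2) t :=
    ((((hasDerivAt_id t).const_mul a).add ((hasDerivAt_pow 2 t).const_mul (b / 2))).add
      ((hasDerivAt_pow 3 t).const_mul (c / 3))).congr_deriv (by push_cast; ring)
  obtain ⟨d, hd⟩ := hs.exists_eq_add_of_deriv_eq hs' hf
    (fun t _ => (hcubic t).differentiableAt.differentiableWithinAt)
    (fun t ht => (hf' t ht).trans (hcubic t).deriv.symm)
  exact ⟨d, fun t ht => by linear_combination hd ht⟩

lemma exists_eq_log_sub_linear_sub_inv {r : ℝ → ℝ} {m k c : ℝ}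
    (hr : DifferentiableOn ℝ r (Ioi 0))
    (hr' : ∀ t, 0 < t → t ^ 2 * deriv r t = m * t - k * t ^ 2 + c) :
    ∃ b, ∀ t, 0 < t → r t = m * Real.log t - k * t - c / t + b := by
  have hprim (t : ℝ) (ht : 0 < t) :
      HasDerivAt (fun x => m * Real.log x - k * x - c / x) (deriv r t) t := by
    refine ((((Real.hasDerivAt_log ht.ne').const_mul m).sub ((hasDerivAt_id t).const_mul k)).sub
      ((hasDerivAt_inv ht.ne').const_mul c)).congr_deriv ?_
    field_simp
    linear_combination -hr' t ht
  obtain ⟨b, hb⟩ := isOpen_Ioi.exists_eq_add_of_deriv_eq isPreconnected_Ioi hr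
    (fun t ht => (hprim t ht).differentiableAt.differentiableWithinAt)
    (fun t ht => (hprim t ht).deriv.symm)
  exact ⟨b, fun t ht => hb ht⟩

/-- The Wronskian, in the variable `u`, of `1 + 2βuv + αβu²v²` and `p`. Exchanging `α` with `β` and
`u` with `v` turns one side of the functional equation into the other. -/
noncomputable def gigWronskian (α β : ℝ) (p : ℝ → ℝ) (u v : ℝ) : ℝ :=
  (1 + 2 * β * u * v + α * β * u ^ 2 * v ^ 2) * deriv p u - 2 * β * v * (1 + α * u * v) * p u

lemma gigWronskian_sq_mul_deriv (α β v : ℝ) {r : ℝ → ℝ} {u : ℝ}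
    (hr : DifferentiableAt ℝ (deriv r) u) :
    gigWronskian α β (fun t => t ^ 2 * deriv r t) u v =
      (1 + 2 * β * u * v + α * β * u ^ 2 * v ^ 2) * u ^ 2 * deriv (deriv r) u +
        (1 + β * u * v) * (2 * u) * deriv r u := by
  have hderiv : deriv (fun t => t ^ 2 * deriv r t) u =
      2 * u * deriv r u + u ^ 2 * deriv (deriv r) u :=
    (((hasDerivAt_pow 2 u).mul hr.hasDerivAt).congr_deriv (by push_cast; ring)).deriv
  rw [gigWronskian, hderiv]
  ring

variable {α β : ℝ} {p q : ℝ → ℝ}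

lemma exists_eq_cubic_of_gigWronskian_eq (hp : DifferentiableOn ℝ p (Ioi 0))
    (h : ∀ u v, 0 < u → 0 < v → gigWronskian α β p u v = gigWronskian β α q v u) :
    ∃ a b c d : ℝ, ∀ u, 0 < u →
      deriv p u = a + b * u + c * u ^ 2 ∧
        p u = d + a * u + b / 2 * u ^ 2 + c / 3 * u ^ 3 := by
  obtain ⟨a, b, c, hp'⟩ := exists_quadratic_of_separated_quadratics
    (f₀ := deriv p)
    (f₁ := fun u => 2 * β * (u * deriv p u - p u))
    (f₂ := fun u => α * β * u * (u * deriv p u - 2 * p u))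
    (g₀ := deriv q)
    (g₁ := fun v => 2 * α * (v * deriv q v - q v))
    (g₂ := fun v => α * β * v * (v * deriv q v - 2 * q v))
    (fun u v hu hv => by
      have huv := h u v hu hv
      simp only [gigWronskian] at huv
      linear_combination huv)
  obtain ⟨d, hd⟩ := exists_eq_cubic_of_deriv_eq_quadratic isOpen_Ioi isPreconnected_Ioi hp hp'
  exact ⟨a, b, c, d, fun u hu => ⟨hp' u hu, hd u hu⟩⟩

lemma deriv_eq_of_gigWronskian_eq_of_tendsto {u q₀ q₁ : ℝ}
    (h : ∀ v, 0 < v → gigWronskian α β p u v = gigWronskian β α q v u)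
    (hq : Tendsto q (𝓝[>] 0) (𝓝 q₀)) (hq' : Tendsto (deriv q) (𝓝[>] 0) (𝓝 q₁)) :
    deriv p u = q₁ - 2 * α * q₀ * u := by
  have hleft : Tendsto (gigWronskian α β p u) (𝓝[>] 0) (𝓝 (deriv p u)) := by
    have hcont : Continuous (gigWronskian α β p u) := by unfold gigWronskian; fun_prop
    simpa [gigWronskian] using (hcont.continuousWithinAt (s := Ioi 0) (x := 0)).tendsto
  have hright : Tendsto (fun v => gigWronskian β α q v u) (𝓝[>] 0)
      (𝓝 (q₁ - 2 * α * q₀ * u)) := by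
    have hfst : Continuous fun v => 1 + 2 * α * v * u + β * α * v ^ 2 * u ^ 2 := by fun_prop
    have hsnd : Continuous fun v => 2 * α * u * (1 + β * v * u) := by fun_prop
    simp only [gigWronskian]
    convert (hfst.continuousWithinAt.tendsto.mul hq').sub
      (hsnd.continuousWithinAt.tendsto.mul hq) using 2
    ring
  exact tendsto_nhds_unique hleft
    (hright.congr' (eventually_mem_nhdsWithin.mono fun v hv => (h v hv).symm))

lemma coeff_eq_of_gigWronskian_eq {a b c a' b' c' d' : ℝ}
    (h : ∀ u v, 0 < u → 0 < v → gigWronskian α β p u v = gigWronskian β α q v u)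
    (hp : ∀ u, 0 < u → deriv p u = a + b * u + c * u ^ 2)
    (hq : ∀ v, 0 < v → deriv q v = a' + b' * v + c' * v ^ 2 ∧
      q v = d' + a' * v + b' / 2 * v ^ 2 + c' / 3 * v ^ 3) :
    a = a' ∧ b = -2 * α * d' ∧ c = 0 := by
  have tendsto_of_eq {f g : ℝ → ℝ} (hfg : ∀ v, 0 < v → f v = g v) (hg : Continuous g) :
      Tendsto f (𝓝[>] 0) (𝓝 (g 0)) :=
    hg.continuousWithinAt.tendsto.congr'
      (eventually_mem_nhdsWithin.mono fun v hv => (hfg v hv).symm)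
  have hq₀ : Tendsto q (𝓝[>] 0) (𝓝 d') := by
    simpa using tendsto_of_eq (fun v hv => (hq v hv).2) (by fun_prop)
  have hq₁ : Tendsto (deriv q) (𝓝[>] 0) (𝓝 a') := by
    simpa using tendsto_of_eq (fun v hv => (hq v hv).1) (by fun_prop)
  have hlin (u : ℝ) (hu : 0 < u) : a + b * u + c * u ^ 2 = a' - 2 * α * d' * u :=
    (hp u hu).symm.trans
      (deriv_eq_of_gigWronskian_eq_of_tendsto (fun v hv => h u v hu hv) hq₀ hq₁)
  have h₁ := hlin 1 one_pos
  have h₂ := hlin 2 two_pos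
  have h₃ := hlin 3 three_pos
  exact ⟨by linarith, by linarith, by linarith⟩

lemma exists_eq_quadratic_of_gigWronskian_eq
    (hp : DifferentiableOn ℝ p (Ioi 0)) (hq : DifferentiableOn ℝ q (Ioi 0))
    (h : ∀ u v, 0 < u → 0 < v → gigWronskian α β p u v = gigWronskian β α q v u) :
    ∃ m c₁ c₂ : ℝ,
      (∀ u, 0 < u → p u = m * u - c₂ * α * u ^ 2 + c₁) ∧
      (∀ v, 0 < v → q v = m * v - c₁ * β * v ^ 2 + c₂) := by
  have h' : ∀ v u, 0 < v → 0 < u → gigWronskian β α q v u = gigWronskian α β p u v :=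
    fun v u hv hu => (h u v hu hv).symm
  obtain ⟨m, b, c, c₁, hpc⟩ := exists_eq_cubic_of_gigWronskian_eq hp h
  obtain ⟨m', b', c', c₂, hqc⟩ := exists_eq_cubic_of_gigWronskian_eq hq h'
  obtain ⟨rfl, rfl, rfl⟩ := coeff_eq_of_gigWronskian_eq h (fun u hu => (hpc u hu).1) hqc
  obtain ⟨-, rfl, rfl⟩ := coeff_eq_of_gigWronskian_eq h' (fun v hv => (hqc v hv).1) hpc
  exact ⟨m, c₁, c₂, fun u hu => by linear_combination (hpc u hu).2,
    fun v hv => by linear_combination (hqc v hv).2⟩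

end

theorem gig_separated_functional_equation_general
    (α β : ℝ) (rU rV : ℝ → ℝ)
    (hU : ∀ t ∈ Ioi (0 : ℝ), DifferentiableAt ℝ rU t ∧ DifferentiableAt ℝ (deriv rU) t)
    (hV : ∀ t ∈ Ioi (0 : ℝ), DifferentiableAt ℝ rV t ∧ DifferentiableAt ℝ (deriv rV) t)
    (heq : ∀ u v : ℝ, 0 < u → 0 < v →
      (1 + 2 * β * u * v + α * β * u ^ 2 * v ^ 2) * u ^ 2 * deriv (deriv rU) u +
          (1 + β * u * v) * (2 * u) * deriv rU u =
        (1 + 2 * α * u * v + α * β * u ^ 2 * v ^ 2) * v ^ 2 * deriv (deriv rV) v +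
          (1 + α * u * v) * (2 * v) * deriv rV v) :
    ∃ l c₁ c₂ b₂ b₃ : ℝ,
      (∀ u : ℝ, 0 < u →
        rU u = (l - 1) * Real.log u - c₂ * α * u - c₁ / u + b₂) ∧
      (∀ v : ℝ, 0 < v →
        rV v = (l - 1) * Real.log v - c₁ * β * v - c₂ / v + b₃) := by
  have differentiableOn_sq_mul {r : ℝ → ℝ} (hr : ∀ t ∈ Ioi (0 : ℝ), DifferentiableAt ℝ r t) :
      DifferentiableOn ℝ (fun t => t ^ 2 * r t) (Ioi 0) := fun t ht =>
    ((differentiableAt_id.pow 2).mul (hr t ht)).differentiableWithinAt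
  obtain ⟨m, c₁, c₂, hrU', hrV'⟩ := exists_eq_quadratic_of_gigWronskian_eq (α := α) (β := β)
    (differentiableOn_sq_mul fun t ht => (hU t ht).2)
    (differentiableOn_sq_mul fun t ht => (hV t ht).2)
    (fun u v hu hv => by
      rw [gigWronskian_sq_mul_deriv α β v (hU u hu).2, gigWronskian_sq_mul_deriv β α u (hV v hv).2]
      linear_combination heq u v hu hv)
  obtain ⟨b₂, hrU⟩ := exists_eq_log_sub_linear_sub_inv
    (fun t ht => (hU t ht).1.differentiableWithinAt) hrU'
  obtain ⟨b₃, hrV⟩ := exists_eq_log_sub_linear_sub_inv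
    (fun t ht => (hV t ht).1.differentiableWithinAt) hrV'
  exact ⟨m + 1, c₁, c₂, b₂, b₃, by simpa only [add_sub_cancel_right] using And.intro hrU hrV⟩

theorem gig_separated_functional_equation
    (α β : ℝ) (hα : 0 ≤ α) (hβ : 0 ≤ β) (hαβ : α ≠ β)
    (rU rV : ℝ → ℝ)
    (hU : ∀ t ∈ Ioi (0 : ℝ), DifferentiableAt ℝ rU t ∧ DifferentiableAt ℝ (deriv rU) t)
    (hV : ∀ t ∈ Ioi (0 : ℝ), DifferentiableAt ℝ rV t ∧ DifferentiableAt ℝ (deriv rV) t)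
    (heq : ∀ u v : ℝ, 0 < u → 0 < v →
      (1 + 2 * β * u * v + α * β * u ^ 2 * v ^ 2) * u ^ 2 * deriv (deriv rU) u +
          (1 + β * u * v) * (2 * u) * deriv rU u =
        (1 + 2 * α * u * v + α * β * u ^ 2 * v ^ 2) * v ^ 2 * deriv (deriv rV) v +
          (1 + α * u * v) * (2 * v) * deriv rV v) :
    ∃ l c₁ c₂ b₂ b₃ : ℝ,
      (∀ u : ℝ, 0 < u →
        rU u = (l - 1) * Real.log u - c₂ * α * u - c₁ / u + b₂) ∧
      (∀ v : ℝ, 0 < v →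
        rV v = (l - 1) * Real.log v - c₁ * β * v - c₂ / v + b₃) :=
  gig_separated_functional_equation_general α β rU rV hU hV heq
end
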